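/- arXiv:2007.06148 — 2 statements merged into one kernel-verified Lean document; each statement's English description precedes it below -/
import Mathlib

section
/- If z* ∈ F satisfies MPSC piecewise CRSC, then the MPSC local error bound holds in a neighborhood of z*: there exist a neighborhood V of z* and α > 0 such that dist(z, F) ≤ α(Σ_{i=1}^p max{g_i(z),0} + Σ_{j=1}^q |h_j(z)| + Σ_{i=1}^m min{|G_i(z)|, |H_i(z)|}) for all z ∈ V. -/
open scoped Classical InnerProductSpace
open Filter Topology

noncomputable section

/-- Euclidean space `ℝⁿ`. -/
abbrev Euc (n : ℕ) : Type := EuclideanSpace ℝ (Fin n)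

/-- Data of a mathematical program with switching constraints (MPSC):
`min f(z)` s.t. `g(z) ≤ 0`, `h(z) = 0`, `Gᵢ(z)Hᵢ(z) = 0 (i = 1,…,m)`,
with all defining functions continuously differentiable (gradients `f'`, `g'`, … are
genuine gradient maps, and they are continuous). -/
structure MPSC (n p q m : ℕ) where
  f : Euc n → ℝ
  g : Fin p → Euc n → ℝ
  h : Fin q → Euc n → ℝ
  G : Fin m → Euc n → ℝ
  H : Fin m → Euc n → ℝ
  f' : Euc n → Euc n
  g' : Fin p → Euc n → Euc n
  h' : Fin q → Euc n → Euc n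
  G' : Fin m → Euc n → Euc n
  H' : Fin m → Euc n → Euc n
  grad_f : ∀ z, HasGradientAt f (f' z) z
  grad_g : ∀ i z, HasGradientAt (g i) (g' i z) z
  grad_h : ∀ j z, HasGradientAt (h j) (h' j z) z
  grad_G : ∀ i z, HasGradientAt (G i) (G' i z) z
  grad_H : ∀ i z, HasGradientAt (H i) (H' i z) z
  cont_f' : Continuous f'
  cont_g' : ∀ i, Continuous (g' i)
  cont_h' : ∀ j, Continuous (h' j)
  cont_G' : ∀ i, Continuous (G' i)
  cont_H' : ∀ i, Continuous (H' i)

namespace MPSC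

variable {n p q m : ℕ} (P : MPSC n p q m)

/-- The feasible region `F` of the MPSC. -/
def Feas : Set (Euc n) :=
  {z | (∀ i, P.g i z ≤ 0) ∧ (∀ j, P.h j z = 0) ∧ ∀ i, P.G i z * P.H i z = 0}

/-- Active inequality constraints `I_g*`. -/
def Ig (zs : Euc n) : Set (Fin p) := {i | P.g i zs = 0}

/-- `I_G* = {i : Gᵢ(z*) = 0, Hᵢ(z*) ≠ 0}`. -/
def IGs (zs : Euc n) : Set (Fin m) := {i | P.G i zs = 0 ∧ P.H i zs ≠ 0}

/-- `I_H* = {i : Gᵢ(z*) ≠ 0, Hᵢ(z*) = 0}`. -/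
def IHs (zs : Euc n) : Set (Fin m) := {i | P.G i zs ≠ 0 ∧ P.H i zs = 0}

/-- `I_GH* = {i : Gᵢ(z*) = Hᵢ(z*) = 0}`. -/
def IGH (zs : Euc n) : Set (Fin m) := {i | P.G i zs = 0 ∧ P.H i zs = 0}

/-- `I_g*(d)`. -/
def Igd (zs d : Euc n) : Set (Fin p) := {i | P.g i zs = 0 ∧ ⟪P.g' i zs, d⟫_ℝ = 0}

/-- `I_G*(d)`. -/
def IGd (zs d : Euc n) : Set (Fin m) :=
  {i | i ∈ P.IGH zs ∧ ⟪P.G' i zs, d⟫_ℝ = 0 ∧ ⟪P.H' i zs, d⟫_ℝ ≠ 0}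

/-- `I_H*(d)`. -/
def IHd (zs d : Euc n) : Set (Fin m) :=
  {i | i ∈ P.IGH zs ∧ ⟪P.G' i zs, d⟫_ℝ ≠ 0 ∧ ⟪P.H' i zs, d⟫_ℝ = 0}

/-- `I_GH*(d)`. -/
def IGHd (zs d : Euc n) : Set (Fin m) :=
  {i | i ∈ P.IGH zs ∧ ⟪P.G' i zs, d⟫_ℝ = 0 ∧ ⟪P.H' i zs, d⟫_ℝ = 0}

/-- The linearization cone `L(z*)` of the MPSC at `z*`. -/
def LinCone (zs : Euc n) : Set (Euc n) :=
  {d | (∀ i ∈ P.Ig zs, ⟪P.g' i zs, d⟫_ℝ ≤ 0) ∧ (∀ j, ⟪P.h' j zs, d⟫_ℝ = 0) ∧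
       (∀ i ∈ P.IGs zs, ⟪P.G' i zs, d⟫_ℝ = 0) ∧ (∀ i ∈ P.IHs zs, ⟪P.H' i zs, d⟫_ℝ = 0) ∧
       (∀ i ∈ P.IGH zs, ⟪P.G' i zs, d⟫_ℝ * ⟪P.H' i zs, d⟫_ℝ = 0)}

/-- The critical cone `C(z*)`. -/
def Crit (zs : Euc n) : Set (Euc n) := {d ∈ P.LinCone zs | ⟪P.f' zs, d⟫_ℝ ≤ 0}

/-- `(λ^g, λ^h, λ^G, λ^H)` is an M-multiplier in direction `d` at `z*`. -/
def IsMMultDir (zs d : Euc n) (lg : Fin p → ℝ) (lh : Fin q → ℝ) (lG lH : Fin m → ℝ) : Prop :=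
  ((0 : Euc n) = P.f' zs
      + (∑ i ∈ Finset.univ.filter (fun i => i ∈ P.Igd zs d), lg i • P.g' i zs)
      + (∑ j, lh j • P.h' j zs) + (∑ i, (lG i • P.G' i zs + lH i • P.H' i zs))) ∧
  (∀ i ∈ P.Igd zs d, 0 ≤ lg i) ∧ (∀ i ∉ P.Igd zs d, lg i = 0) ∧
  (∀ i, i ∈ P.IHs zs ∪ P.IHd zs d → lG i = 0) ∧
  (∀ i, i ∈ P.IGs zs ∪ P.IGd zs d → lH i = 0) ∧
  ∀ i ∈ P.IGHd zs d, lG i * lH i = 0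

/-- `z*` is M-stationary in direction `d`. -/
def MStatDir (zs d : Euc n) : Prop :=
  ∃ (lg : Fin p → ℝ) (lh : Fin q → ℝ) (lG lH : Fin m → ℝ), P.IsMMultDir zs d lg lh lG lH

/-- `z*` is S-stationary in direction `d`. -/
def SStatDir (zs d : Euc n) : Prop :=
  ∃ (lg : Fin p → ℝ) (lh : Fin q → ℝ) (lG lH : Fin m → ℝ),
    P.IsMMultDir zs d lg lh lG lH ∧ ∀ i ∈ P.IGHd zs d, lG i = 0 ∧ lH i = 0

/-- MPSC-LICQ in direction `d` at `z*`. -/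
def LICQd (zs d : Euc n) : Prop :=
  LinearIndependent ℝ
    (Sum.elim (fun i : {i // i ∈ P.Igd zs d} => P.g' i.1 zs)
      (Sum.elim (fun j : Fin q => P.h' j zs)
        (Sum.elim (fun i : {i // i ∈ P.IGs zs ∪ P.IGd zs d ∪ P.IGHd zs d} => P.G' i.1 zs)
          (fun i : {i // i ∈ P.IHs zs ∪ P.IHd zs d ∪ P.IGHd zs d} => P.H' i.1 zs))))

/-- MPSC-LICQ at `z*`. -/
def LICQ (zs : Euc n) : Prop :=
  LinearIndependent ℝ
    (Sum.elim (fun i : {i // i ∈ P.Ig zs} => P.g' i.1 zs)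
      (Sum.elim (fun j : Fin q => P.h' j zs)
        (Sum.elim (fun i : {i // i ∈ P.IGs zs ∪ P.IGH zs} => P.G' i.1 zs)
          (fun i : {i // i ∈ P.IHs zs ∪ P.IGH zs} => P.H' i.1 zs))))

/-- MPSC quasi-normality at `z*` in direction `d`. -/
def QuasiNormalDir (zs d : Euc n) : Prop :=
  ∀ (lg : Fin p → ℝ) (lh : Fin q → ℝ) (lG lH : Fin m → ℝ),
    ((0 : Euc n) = (∑ i, lg i • P.g' i zs) + (∑ j, lh j • P.h' j zs)
        + (∑ i, (lG i • P.G' i zs + lH i • P.H' i zs))) →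
    ((∀ i ∈ P.Igd zs d, 0 ≤ lg i) ∧ (∀ i ∉ P.Igd zs d, lg i = 0) ∧
      (∀ i, i ∈ P.IGs zs ∪ P.IGd zs d → lH i = 0) ∧
      (∀ i, i ∈ P.IHs zs ∪ P.IHd zs d → lG i = 0) ∧
      ∀ i ∈ P.IGHd zs d, lG i * lH i = 0) →
    (∃ (dk : ℕ → Euc n) (t : ℕ → ℝ),
      Tendsto dk atTop (𝓝 d) ∧ (∀ k, 0 < t k) ∧ Tendsto t atTop (𝓝 0) ∧
      ∀ k, (∀ i, lg i ≠ 0 → 0 < lg i * P.g i (zs + t k • dk k)) ∧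
        (∀ j, lh j ≠ 0 → 0 < lh j * P.h j (zs + t k • dk k)) ∧
        (∀ i, lG i ≠ 0 → 0 < lG i * P.G i (zs + t k • dk k)) ∧
        (∀ i, lH i ≠ 0 → 0 < lH i * P.H i (zs + t k • dk k))) →
    lg = 0 ∧ lh = 0 ∧ lG = 0 ∧ lH = 0

/-- MPSC directional quasi-normality at `z*`: quasi-normality in every direction of
the linearization cone. -/
def DirQuasiNormal (zs : Euc n) : Prop := ∀ d ∈ P.LinCone zs, P.QuasiNormalDir zs d

/-- `(λ^g, λ^h, λ^G, λ^H)` is an S-multiplier at `z*` (S-stationarity conditions). -/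
def IsSMult (zs : Euc n) (lg : Fin p → ℝ) (lh : Fin q → ℝ) (lG lH : Fin m → ℝ) : Prop :=
  ((0 : Euc n) = P.f' zs
      + (∑ i ∈ Finset.univ.filter (fun i => i ∈ P.Ig zs), lg i • P.g' i zs)
      + (∑ j, lh j • P.h' j zs) + (∑ i, (lG i • P.G' i zs + lH i • P.H' i zs))) ∧
  (∀ i ∈ P.Ig zs, 0 ≤ lg i) ∧ (∀ i ∈ P.IHs zs, lG i = 0) ∧ (∀ i ∈ P.IGs zs, lH i = 0) ∧
  ∀ i ∈ P.IGH zs, lG i = 0 ∧ lH i = 0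

/-- `(λ^g, λ^h, λ^G, λ^H)` is an M-multiplier at `z*` (M-stationarity conditions). -/
def IsMMult (zs : Euc n) (lg : Fin p → ℝ) (lh : Fin q → ℝ) (lG lH : Fin m → ℝ) : Prop :=
  ((0 : Euc n) = P.f' zs
      + (∑ i ∈ Finset.univ.filter (fun i => i ∈ P.Ig zs), lg i • P.g' i zs)
      + (∑ j, lh j • P.h' j zs) + (∑ i, (lG i • P.G' i zs + lH i • P.H' i zs))) ∧
  (∀ i ∈ P.Ig zs, 0 ≤ lg i) ∧ (∀ i ∈ P.IHs zs, lG i = 0) ∧ (∀ i ∈ P.IGs zs, lH i = 0) ∧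
  ∀ i ∈ P.IGH zs, lG i * lH i = 0

/-- The rank `r(z*; d)` of the relevant family of gradients. -/
def rankd (zs d : Euc n) : ℕ :=
  Set.finrank ℝ
    ((fun i => P.g' i zs) '' P.Igd zs d ∪ Set.range (fun j => P.h' j zs) ∪
      (fun i => P.G' i zs) '' (P.IGs zs ∪ P.IGd zs d ∪ P.IGHd zs d) ∪
      (fun i => P.H' i zs) '' (P.IHs zs ∪ P.IHd zs d ∪ P.IGHd zs d))

/-- `(J_g, J_G, J_H)` is an MPSC working set in direction `d`. -/
def IsWorkingSet (zs d : Euc n) (Jg : Finset (Fin p)) (JG JH : Finset (Fin m)) : Prop :=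
  (∀ i ∈ Jg, i ∈ P.Igd zs d) ∧
  (∀ i ∈ JG, i ∈ P.IGs zs ∪ P.IGd zs d ∪ P.IGHd zs d) ∧
  (∀ i ∈ JH, i ∈ P.IHs zs ∪ P.IHd zs d ∪ P.IGHd zs d) ∧
  JG ∪ JH = Finset.univ ∧
  Jg.card + q + JG.card + JH.card = P.rankd zs d ∧
  LinearIndependent ℝ
    (Sum.elim (fun i : {i // i ∈ Jg} => P.g' i.1 zs)
      (Sum.elim (fun j : Fin q => P.h' j zs)
        (Sum.elim (fun i : {i // i ∈ JG} => P.G' i.1 zs)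
          (fun i : {i // i ∈ JH} => P.H' i.1 zs))))

/-- `z*` is strongly M-stationary in direction `d`. -/
def StronglyMStatDir (zs d : Euc n) : Prop :=
  ∃ (Jg : Finset (Fin p)) (JG JH : Finset (Fin m)) (lg : Fin p → ℝ) (lh : Fin q → ℝ)
    (lG lH : Fin m → ℝ),
    P.IsWorkingSet zs d Jg JG JH ∧ P.IsMMultDir zs d lg lh lG lH ∧
    (∀ i ∉ Jg, lg i = 0) ∧ (∀ i ∉ JG, lG i = 0) ∧ (∀ i ∉ JH, lH i = 0) ∧
    ∀ i ∈ JG ∩ JH, lG i = 0 ∧ lH i = 0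

/-- The MPSC constraint-violation residual. -/
def residual (z : Euc n) : ℝ :=
  (∑ i, max (P.g i z) 0) + (∑ j, |P.h j z|) + ∑ i, min |P.G i z| |P.H i z|

/-- The MPSC local error bound property around `z*`. -/
def ErrorBound (zs : Euc n) : Prop :=
  ∃ V ∈ 𝓝 zs, ∃ α > (0 : ℝ), ∀ z ∈ V, Metric.infDist z P.Feas ≤ α * P.residual z

/-- Equality-constraint gradients (at `z`) of the branch problem `NLP(β₁, β₂)`. -/
def EqGrads (zs : Euc n) (b1 b2 : Set (Fin m)) (z : Euc n) : Set (Euc n) :=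
  Set.range (fun j => P.h' j z) ∪ (fun i => P.G' i z) '' (P.IGs zs ∪ b1) ∪
    (fun i => P.H' i z) '' (P.IHs zs ∪ b2)

/-- The index set `I⁻` of the branch problem `NLP(β₁, β₂)` at `z*`. -/
def Iminus (zs : Euc n) (b1 b2 : Set (Fin m)) : Set (Fin p) :=
  {l | l ∈ P.Ig zs ∧
    ∃ (lh : Fin q → ℝ) (lG lH : Fin m → ℝ) (mu : Fin p → ℝ),
      (∀ i, i ∉ P.IGs zs ∪ b1 → lG i = 0) ∧ (∀ i, i ∉ P.IHs zs ∪ b2 → lH i = 0) ∧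
      (∀ i, 0 ≤ mu i) ∧ (∀ i, ¬(i ∈ P.Ig zs ∧ i ≠ l) → mu i = 0) ∧
      -(P.g' l zs) = (∑ j, lh j • P.h' j zs)
        + (∑ i, (lG i • P.G' i zs + lH i • P.H' i zs)) + (∑ i, mu i • P.g' i zs)}

/-- CRSC holds at `z*` for the branch problem `NLP(β₁, β₂)`. -/
def CRSCpiece (zs : Euc n) (b1 b2 : Set (Fin m)) : Prop :=
  ∃ U ∈ 𝓝 zs, ∀ z ∈ U,
    Set.finrank ℝ ((fun i => P.g' i z) '' P.Iminus zs b1 b2 ∪ P.EqGrads zs b1 b2 z) =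
      Set.finrank ℝ ((fun i => P.g' i zs) '' P.Iminus zs b1 b2 ∪ P.EqGrads zs b1 b2 zs)

/-- MPSC piecewise CRSC: CRSC holds for every branch problem `NLP(β₁, β₂)`. -/
def PiecewiseCRSC (zs : Euc n) : Prop :=
  ∀ b1 b2 : Set (Fin m), b1 ∪ b2 = P.IGH zs → b1 ∩ b2 = ∅ → P.CRSCpiece zs b1 b2

/-- The set-valued map `K` (index sets frozen at `z*`, gradients at `z`). -/
def Kmap (zs z : Euc n) : Set (Euc n) :=
  {y | ∃ (lg : Fin p → ℝ) (lh : Fin q → ℝ) (lG lH : Fin m → ℝ),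
      (∀ i, 0 ≤ lg i) ∧ (∀ i, i ∉ P.Ig zs → lg i = 0) ∧
      (∀ i ∈ P.IGs zs, lH i = 0) ∧ (∀ i ∈ P.IHs zs, lG i = 0) ∧
      (∀ i ∈ P.IGH zs, lG i * lH i = 0) ∧
      y = (∑ i, lg i • P.g' i z) + (∑ j, lh j • P.h' j z)
          + (∑ i, (lG i • P.G' i z + lH i • P.H' i z))}

/-- `z*` is AM-regular. -/
def AMRegular (zs : Euc n) : Prop :=
  ∀ y : Euc n,
    (∃ zk yk : ℕ → Euc n, Tendsto zk atTop (𝓝 zs) ∧ Tendsto yk atTop (𝓝 y) ∧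
      ∀ k, yk k ∈ P.Kmap zs (zk k)) → y ∈ P.Kmap zs zs

/-- The regular (Fréchet) normal cone to `A` at `x`. -/
def frechetNormalCone (A : Set (Euc n)) (x : Euc n) : Set (Euc n) :=
  {ζ | ∀ ε > (0 : ℝ), ∃ δ > (0 : ℝ), ∀ y ∈ A, ‖y - x‖ < δ → ⟪ζ, y - x⟫_ℝ ≤ ε * ‖y - x‖}

/-- The generalized Guignard constraint qualification at `z*`. -/
def GGCQ (zs : Euc n) : Prop :=
  frechetNormalCone P.Feas zs = {ζ | ∀ d ∈ P.LinCone zs, ⟪ζ, d⟫_ℝ ≤ 0}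

/-- Membership in the multiplier set `R_SC`. -/
def InRSC (zs : Euc n) (lg : Fin p → ℝ) (lh : Fin q → ℝ) (lG lH : Fin m → ℝ) : Prop :=
  (∀ i, i ∉ P.Ig zs → lg i = 0) ∧ (∀ i ∈ P.IHs zs, lG i = 0) ∧ ∀ i ∈ P.IGs zs, lH i = 0

/-- Membership in the multiplier set `N_SC`. -/
def InNSC (zs : Euc n) (mg : Fin p → ℝ) (mh : Fin q → ℝ) (mG mH : Fin m → ℝ) : Prop :=
  P.InRSC zs mg mh mG mH ∧
  (0 : Euc n) = (∑ i, mg i • P.g' i zs) + (∑ j, mh j • P.h' j zs)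
      + (∑ i, (mG i • P.G' i zs + mH i • P.H' i zs))

/-- `z*` is Q-stationary with respect to the bipartition `(β₁, β₂)` of `I_GH*`. -/
def QStat (zs : Euc n) (b1 b2 : Set (Fin m)) : Prop :=
  ∃ (lg mg : Fin p → ℝ) (lh mh : Fin q → ℝ) (lG lH mG mH : Fin m → ℝ),
    P.InRSC zs lg lh lG lH ∧
    ((0 : Euc n) = P.f' zs + (∑ i, lg i • P.g' i zs) + (∑ j, lh j • P.h' j zs)
        + (∑ i, (lG i • P.G' i zs + lH i • P.H' i zs))) ∧
    P.InNSC zs mg mh mG mH ∧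
    (∀ i ∈ P.Ig zs, max (mg i) 0 ≤ lg i) ∧
    (∀ i ∈ b1, lH i = 0 ∧ lG i = mG i) ∧
    ∀ i ∈ b2, lG i = 0 ∧ lH i = mH i

end MPSC

/-!
At each `z` the MPSC residual equals the residual of the branch that requires, for each `i`, the
smaller of `|G i z|` and `|H i z|` to vanish, and feasible points of a branch are feasible for the
MPSC. Since there are finitely many branches, it suffices to prove an error bound for a nonlinear
program satisfying CRSC at `x`.

There the map `Φ` collecting the constraints in `I⁻` and the equalities has constant rank, so its
level set is a Lipschitz retract of a neighbourhood, at distance `O(‖Φ z‖)`, and its image satisfies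
every linear relation between the gradients to first order. Farkas' lemma provides such a relation
with coefficients at least `1` on `I⁻`, which bounds `‖Φ z‖` by the residual, and also a direction
`d` tangent to the level set along which all other active constraints strictly decrease. To reach
the feasible set, move along `d` by a large multiple of the residual and retract onto the level set.
-/

section MultiplierCone

open PointedCone Module

variable {𝕜 V ι κ : Type*} [Field 𝕜] [LinearOrder 𝕜] [IsStrictOrderedRing 𝕜] [AddCommGroup V]
  [Module 𝕜 V]

variable (𝕜) in
/-- The cone of all vectors `∑ i ∈ I, μ i • a i + ∑ j, c j • b j` with `μ i ≥ 0` and free `c j`.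
For linear functionals it is the dual description of `{x | a i x ≤ 0 for i ∈ I, b j x = 0}`. -/
def multiplierCone (a : ι → V) (b : κ → V) (I : Set ι) : PointedCone 𝕜 V :=
  hull 𝕜 (a '' I) ⊔ ofSubmodule (Submodule.span 𝕜 (Set.range b))

lemma mem_multiplierCone_of_mem (a : ι → V) (b : κ → V) {I : Set ι} {i : ι} (hi : i ∈ I) :
    a i ∈ multiplierCone 𝕜 a b I :=
  Submodule.mem_sup_left (subset_hull (Set.mem_image_of_mem a hi))

lemma multiplierCone_mono (a : ι → V) (b : κ → V) {I I' : Set ι} (h : I ⊆ I') :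
    multiplierCone 𝕜 a b I ≤ multiplierCone 𝕜 a b I' :=
  sup_le_sup_right (Submodule.span_mono (Set.image_mono h)) _

lemma multiplierCone_sub_smul_le (a : ι → V) (b : κ → V) {I : Set ι} (n : ι) {t : ι → 𝕜}
    (ht : ∀ i ∈ I, t i ≤ 0) :
    multiplierCone 𝕜 (fun i ↦ a i - t i • a n) b I ≤ multiplierCone 𝕜 a b (insert n I) := by
  refine sup_le (Submodule.span_le.2 ?_) le_sup_right
  rintro _ ⟨i, hi, rfl⟩
  have hmem := add_mem (mem_multiplierCone_of_mem a b (Set.mem_insert_of_mem n hi))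
    (PointedCone.smul_mem _ (neg_nonneg.2 (ht i hi))
      (mem_multiplierCone_of_mem a b (Set.mem_insert n I)))
  simpa [sub_eq_add_neg] using hmem

lemma mem_multiplierCone_iff [Fintype ι] [Fintype κ] {a : ι → V} {b : κ → V} {I : Set ι} {v : V} :
    v ∈ multiplierCone 𝕜 a b I ↔ ∃ (μ : ι → 𝕜) (c : κ → 𝕜), (∀ i, 0 ≤ μ i) ∧ (∀ i ∉ I, μ i = 0) ∧
      v = ∑ i, μ i • a i + ∑ j, c j • b j := by
  constructor
  · intro hv
    obtain ⟨w, hw, u, hu, rfl⟩ := Submodule.mem_sup.1 hv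
    obtain ⟨l, hl, rfl⟩ := (Finsupp.mem_span_image_iff_linearCombination _).1 hw
    obtain ⟨c, rfl⟩ := (Submodule.mem_span_range_iff_exists_fun 𝕜).1 hu
    refine ⟨fun i ↦ l i, c, fun i ↦ (l i).2, fun i hi ↦ ?_, ?_⟩
    · simp [(Finsupp.mem_supported' _ l).1 hl i hi]
    · rw [Finsupp.linearCombination_apply, Finsupp.sum_fintype _ _ (fun i ↦ zero_smul _ (a i))]
      rfl
  · rintro ⟨μ, c, hμ, hI, rfl⟩
    refine add_mem (sum_mem fun i _ ↦ ?_) (Submodule.mem_sup_right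
      ((Submodule.mem_span_range_iff_exists_fun 𝕜).2 ⟨c, rfl⟩))
    by_cases hi : i ∈ I
    · exact PointedCone.smul_mem _ (hμ i) (mem_multiplierCone_of_mem a b hi)
    · simp [hI i hi]

lemma multiplierCone_comp {W : Type*} [AddCommGroup W] [Module 𝕜 W] (e : V →ₗ[𝕜] W) (a : ι → V)
    (b : κ → V) (I : Set ι) :
    multiplierCone 𝕜 (e ∘ a) (e ∘ b) I = (multiplierCone 𝕜 a b I).map e := by
  rw [multiplierCone, multiplierCone, PointedCone.map, Submodule.map_sup, hull, hull,
    Submodule.map_span, Set.image_comp, Set.range_comp, ← Submodule.map_span]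
  rfl

lemma neg_mem_multiplierCone_diff_singleton {a : ι → V} {b : κ → V} {I : Set ι} {l : ι}
    (h : -a l ∈ multiplierCone 𝕜 a b I) : -a l ∈ multiplierCone 𝕜 a b (I \ {l}) := by
  have hins : -a l ∈ multiplierCone 𝕜 a b (insert l (I \ {l})) :=
    multiplierCone_mono a b (by simp [Set.subset_insert]) h
  rw [multiplierCone, Set.image_insert_eq, hull, Submodule.span_insert, sup_assoc] at hins
  obtain ⟨w, hw, v, hv, hwv⟩ := Submodule.mem_sup.1 hins
  obtain ⟨⟨c, hc⟩, rfl⟩ := Submodule.mem_span_singleton.1 hw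
  have hc' : 0 < 1 + c := by positivity
  have hval : -a l = (1 + c)⁻¹ • v := by
    rw [eq_inv_smul_iff₀ hc'.ne', ← sub_eq_of_eq_add' hwv.symm]
    simp only [Nonneg.mk_smul]
    module
  rw [hval]
  exact PointedCone.smul_mem _ (by positivity) hv

/-- **Farkas' lemma** -/
lemma mem_multiplierCone_of_forall_nonpos [Finite κ] {a : ι → Dual 𝕜 V} {b : κ → Dual 𝕜 V}
    {I : Set ι} (hI : I.Finite) {f : Dual 𝕜 V}
    (hf : ∀ x, (∀ i ∈ I, a i x ≤ 0) → (∀ j, b j x = 0) → f x ≤ 0) :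
    f ∈ multiplierCone 𝕜 a b I := by
  induction I, hI using Set.Finite.induction_on generalizing a f with
  | empty =>
    refine Submodule.mem_sup_right (mem_span_of_iInf_ker_le_ker fun x hx ↦ ?_)
    have hb : ∀ j, b j x = 0 := by simpa using hx
    have hneg : f (-x) ≤ 0 := hf (-x) (by simp) (by simpa using hb)
    exact le_antisymm (hf x (by simp) hb) (by simpa using hneg)
  | @insert n I _ _ ih =>
    have hmono := multiplierCone_mono (𝕜 := 𝕜) a b (Set.subset_insert n I)
    by_cases hI : ∀ x, (∀ i ∈ I, a i x ≤ 0) → (∀ j, b j x = 0) → f x ≤ 0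
    · exact hmono (ih hI)
    push Not at hI
    obtain ⟨x₀, hx₀, hb₀, hf₀⟩ := hI
    have hn : 0 < a n x₀ := by
      by_contra! hn
      exact hf₀.not_ge (hf x₀ (Set.forall_mem_insert.2 ⟨hn, hx₀⟩) hb₀)
    -- Projecting along `x₀` onto `ker (a n)` eliminates the constraint `a n`.
    let π : Dual 𝕜 V → Dual 𝕜 V := fun φ ↦ φ - (φ x₀ / a n x₀) • a n
    have hπ (φ : Dual 𝕜 V) (x : V) : π φ x = φ (x - (a n x / a n x₀) • x₀) := by
      simp only [π, LinearMap.sub_apply, LinearMap.smul_apply, map_sub, map_smul, smul_eq_mul]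
      ring
    have hfπ : π f ∈ multiplierCone 𝕜 (fun i ↦ π (a i)) b I := by
      refine ih fun x hx hb ↦ ?_
      rw [hπ]
      refine hf _ (Set.forall_mem_insert.2 ⟨?_, fun i hi ↦ by rw [← hπ]; exact hx i hi⟩) ?_
      · simp [hn.ne']
      · simp [hb, hb₀]
    have hcone : multiplierCone 𝕜 (fun i ↦ π (a i)) b I ≤ multiplierCone 𝕜 a b (insert n I) :=
      multiplierCone_sub_smul_le a b n fun i hi ↦ div_nonpos_of_nonpos_of_nonneg (hx₀ i hi) hn.le
    have hadd := add_mem (hcone hfπ) (PointedCone.smul_mem _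
      (show 0 ≤ f x₀ / a n x₀ by positivity) (mem_multiplierCone_of_mem a b (Set.mem_insert n I)))
    simpa [π] using hadd

variable (𝕜) in
/-- The indices `l ∈ I` for which `a l ≤ 0` is an implicit equality of the system
`a i ≤ 0 (i ∈ I)`, `b j = 0`, in the form in which `I⁻` enters CRSC. -/
def implicitEqualities (a : ι → V) (b : κ → V) (I : Set ι) : Set ι :=
  {l | l ∈ I ∧ -a l ∈ multiplierCone 𝕜 a b (I \ {l})}

lemma mem_implicitEqualities_iff {a : ι → V} {b : κ → V} {I : Set ι} {l : ι} :
    l ∈ implicitEqualities 𝕜 a b I ↔ l ∈ I ∧ -a l ∈ multiplierCone 𝕜 a b I :=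
  and_congr_right fun _ ↦
    ⟨fun h ↦ multiplierCone_mono a b Set.sdiff_subset h, neg_mem_multiplierCone_diff_singleton⟩

lemma implicitEqualities_comp {W : Type*} [AddCommGroup W] [Module 𝕜 W] {e : V →ₗ[𝕜] W}
    (he : Function.Injective e) (a : ι → V) (b : κ → V) (I : Set ι) :
    implicitEqualities 𝕜 (e ∘ a) (e ∘ b) I = implicitEqualities 𝕜 a b I := by
  ext l
  simp only [implicitEqualities, multiplierCone_comp, PointedCone.mem_map, Set.mem_ofPred_eq,
    Function.comp_apply, ← map_neg, he.eq_iff, exists_eq_right]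

lemma apply_nonpos_of_mem_multiplierCone {a : ι → Dual 𝕜 V} {b : κ → Dual 𝕜 V} {I : Set ι}
    {f : Dual 𝕜 V} (hf : f ∈ multiplierCone 𝕜 a b I) {x : V} (ha : ∀ i ∈ I, a i x ≤ 0)
    (hb : ∀ j, b j x = 0) : f x ≤ 0 := by
  obtain ⟨u, hu, v, hv, rfl⟩ := Submodule.mem_sup.1 hf
  have hux : u x ≤ 0 := by
    clear hf
    induction hu using Submodule.span_induction with
    | mem _ h => obtain ⟨i, hi, rfl⟩ := h; exact ha i hi
    | zero => simp
    | add φ ψ _ _ hφ hψ => simpa using add_nonpos hφ hψ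
    | smul t φ _ hφ => exact mul_nonpos_of_nonneg_of_nonpos t.2 hφ
  have hvx : v x = 0 := by
    have hspan : Submodule.span 𝕜 (Set.range b) ≤ (Dual.eval 𝕜 V x).ker :=
      Submodule.span_le.2 (Set.range_subset_iff.2 hb)
    exact hspan hv
  simpa [hvx] using hux

lemma apply_eq_zero_of_mem_implicitEqualities {a : ι → Dual 𝕜 V} {b : κ → Dual 𝕜 V} {I : Set ι}
    {l : ι} (hl : l ∈ implicitEqualities 𝕜 a b I) {x : V}
    (ha : ∀ i ∈ I, a i x ≤ 0) (hb : ∀ j, b j x = 0) : a l x = 0 := by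
  obtain ⟨hlI, hneg⟩ := mem_implicitEqualities_iff.1 hl
  have hle : (-a l) x ≤ 0 := apply_nonpos_of_mem_multiplierCone hneg ha hb
  exact le_antisymm (ha l hlI) (by simpa using hle)

lemma exists_apply_eq_neg_one_of_notMem_implicitEqualities [Finite ι] [Finite κ]
    {a : ι → Dual 𝕜 V} {b : κ → Dual 𝕜 V} {I : Set ι} {l : ι} (hl : l ∈ I)
    (hl' : l ∉ implicitEqualities 𝕜 a b I) :
    ∃ d, (∀ i ∈ I, a i d ≤ 0) ∧ (∀ j, b j d = 0) ∧ a l d = -1 := by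
  have hnot : -a l ∉ multiplierCone 𝕜 a b I :=
    fun h ↦ hl' (mem_implicitEqualities_iff.2 ⟨hl, h⟩)
  obtain ⟨x, hx, hb, hlx⟩ : ∃ x, (∀ i ∈ I, a i x ≤ 0) ∧ (∀ j, b j x = 0) ∧ a l x < 0 := by
    contrapose! hnot
    exact mem_multiplierCone_of_forall_nonpos I.toFinite fun x hx hb ↦ by simpa using hnot x hx hb
  refine ⟨(-a l x)⁻¹ • x, fun i hi ↦ ?_, by simp [hb], by simp [hlx.ne, inv_neg]⟩
  have hpos : 0 ≤ (-a l x)⁻¹ := inv_nonneg.2 (neg_nonneg.2 hlx.le)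
  simpa using mul_nonpos_of_nonneg_of_nonpos hpos (hx i hi)

lemma exists_apply_le_neg_one_diff_implicitEqualities [Finite ι] [Finite κ] (a : ι → Dual 𝕜 V)
    (b : κ → Dual 𝕜 V) (I : Set ι) :
    ∃ d, (∀ i ∈ implicitEqualities 𝕜 a b I, a i d = 0) ∧ (∀ j, b j d = 0) ∧
      ∀ i ∈ I \ implicitEqualities 𝕜 a b I, a i d ≤ -1 := by
  have hdir (l : ι) (hl : l ∈ I \ implicitEqualities 𝕜 a b I) :=
    exists_apply_eq_neg_one_of_notMem_implicitEqualities hl.1 hl.2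
  choose! d hdI hdb hdl using hdir
  let s := (I \ implicitEqualities 𝕜 a b I).toFinite.toFinset
  have hs {l : ι} : l ∈ s ↔ l ∈ I \ implicitEqualities 𝕜 a b I := Set.Finite.mem_toFinset _
  refine ⟨∑ l ∈ s, d l, fun i hi ↦ ?_, fun j ↦ ?_, fun i hi ↦ ?_⟩
  · rw [map_sum]
    exact Finset.sum_eq_zero fun l hl ↦
      apply_eq_zero_of_mem_implicitEqualities hi (hdI l (hs.1 hl)) (hdb l (hs.1 hl))
  · rw [map_sum]
    exact Finset.sum_eq_zero fun l hl ↦ hdb l (hs.1 hl) j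
  · rw [map_sum, ← Finset.add_sum_erase s _ (hs.2 hi), hdl i hi]
    have hrest : ∑ l ∈ s.erase i, a i (d l) ≤ 0 :=
      Finset.sum_nonpos fun l hl ↦ hdI l (hs.1 (Finset.mem_of_mem_erase hl)) i hi.1
    linarith

lemma exists_one_le_sum_implicitEqualities_eq_zero [Fintype ι] [Fintype κ] (a : ι → Dual 𝕜 V)
    (b : κ → Dual 𝕜 V) (I : Set ι) :
    ∃ (μ : ι → 𝕜) (c : κ → 𝕜), (∀ i ∈ implicitEqualities 𝕜 a b I, 1 ≤ μ i) ∧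
      (∀ i ∉ implicitEqualities 𝕜 a b I, μ i = 0) ∧ ∑ i, μ i • a i + ∑ j, c j • b j = 0 := by
  set J := implicitEqualities 𝕜 a b I
  let s := J.toFinite.toFinset
  have hs {i : ι} : i ∈ s ↔ i ∈ J := Set.Finite.mem_toFinset _
  have hsum : ∑ i ∈ s, -a i ∈ multiplierCone 𝕜 a b I :=
    sum_mem fun i hi ↦ (mem_implicitEqualities_iff.1 (hs.1 hi)).2
  obtain ⟨μ, c, hμ, hμI, heq⟩ := mem_multiplierCone_iff.1 hsum
  obtain ⟨d, hdJ, hdb, hdI⟩ := exists_apply_le_neg_one_diff_implicitEqualities a b I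
  have hterm (i : ι) : μ i * a i d ≤ 0 := by
    by_cases hiI : i ∈ I
    · by_cases hiJ : i ∈ J
      · simp [hdJ i hiJ]
      · exact mul_nonpos_of_nonneg_of_nonpos (hμ i) (by linarith [hdI i ⟨hiI, hiJ⟩])
    · simp [hμI i hiI]
  have hzero : ∑ i, μ i * a i d = 0 := by
    have hd := LinearMap.congr_fun heq d
    simp only [LinearMap.add_apply, LinearMap.sum_apply, LinearMap.smul_apply, LinearMap.neg_apply,
      smul_eq_mul, hdb, mul_zero, Finset.sum_const_zero, add_zero] at hd
    rw [← hd]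
    exact Finset.sum_eq_zero fun i hi ↦ by simp [hdJ i (hs.1 hi)]
  have hμJ (i : ι) (hi : i ∉ J) : μ i = 0 := by
    by_cases hiI : i ∈ I
    · have hprod := (Finset.sum_eq_zero_iff_of_nonpos fun i _ ↦ hterm i).1 hzero i (by simp)
      exact (mul_eq_zero.1 hprod).resolve_right (by linarith [hdI i ⟨hiI, hi⟩])
    · exact hμI i hiI
  refine ⟨fun i ↦ μ i + J.indicator 1 i, c, fun i hi ↦ by simp [hi, hμ i],
    fun i hi ↦ by simp [hi, hμJ i hi], ?_⟩
  have hind : ∑ i, J.indicator (1 : ι → 𝕜) i • a i = ∑ i ∈ s, a i := by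
    simp [Set.indicator_apply, ite_smul, ← hs]
  simp only [add_smul, Finset.sum_add_distrib, hind]
  rw [add_right_comm, ← heq, Finset.sum_neg_distrib, neg_add_cancel]

end MultiplierCone

section ImplicitFunction

variable {E F G G' : Type*} [NormedAddCommGroup E] [NormedSpace ℝ E]
  [NormedAddCommGroup F] [NormedSpace ℝ F] [NormedAddCommGroup G] [NormedSpace ℝ G]
  [NormedAddCommGroup G'] [NormedSpace ℝ G']

lemma eventually_eq_of_fderiv_comp_inr_eq_zero {H : F × G → G'} {p₀ : F × G}
    (hH : ∀ᶠ p in 𝓝 p₀, DifferentiableAt ℝ H p)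
    (hH' : ∀ᶠ p in 𝓝 p₀, fderiv ℝ H p ∘L .inr ℝ F G = 0) :
    ∀ᶠ p in 𝓝 p₀, H p = H (p.1, p₀.2) := by
  obtain ⟨r, hr, hball⟩ := Metric.eventually_nhds_iff_ball.1 (hH.and hH')
  refine Metric.eventually_nhds_iff_ball.2 ⟨r, hr, fun p hp ↦ ?_⟩
  rw [← ball_prod_same] at hp hball
  have hslice (w : G) (hw : w ∈ Metric.ball p₀.2 r) :
      HasFDerivAt (fun w ↦ H (p.1, w)) (0 : G →L[ℝ] G') w := by
    obtain ⟨hd, hzero⟩ := hball (p.1, w) ⟨hp.1, hw⟩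
    exact hzero ▸ hd.hasFDerivAt.comp w (hasFDerivAt_prodMk_right p.1 w)
  exact Metric.isOpen_ball.is_const_of_fderiv_eq_zero (convex_ball p₀.2 r).isPreconnected
    (fun w hw ↦ (hslice w hw).differentiableAt.differentiableWithinAt)
    (fun w hw ↦ (hslice w hw).fderiv) hp.2 (Metric.mem_ball_self hr)

variable [CompleteSpace E] [CompleteSpace F] [CompleteSpace G]

lemma exists_retraction_leftFun (φ : ImplicitFunctionData ℝ E F G) :
    ∃ (ρ : E → E) (C : ℝ), 0 ≤ C ∧ Tendsto ρ (𝓝 φ.pt) (𝓝 φ.pt) ∧ ∀ᶠ z in 𝓝 φ.pt,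
      φ.leftFun (ρ z) = φ.leftFun φ.pt ∧ dist z (ρ z) ≤ C * ‖φ.leftFun z - φ.leftFun φ.pt‖ := by
  have hleft : ContinuousAt φ.leftFun φ.pt := φ.hasStrictFDerivAt_leftFun.continuousAt
  have hright : ContinuousAt φ.rightFun φ.pt := φ.hasStrictFDerivAt_rightFun.continuousAt
  have hinv : HasStrictFDerivAt φ.implicitFunction.uncurry _ (φ.prodFun φ.pt) :=
    φ.hasStrictFDerivAt.to_localInverse
  obtain ⟨C, s, hs, hlip⟩ := hinv.exists_lipschitzOnWith
  have hslice : Tendsto (fun z ↦ (φ.leftFun φ.pt, φ.rightFun z)) (𝓝 φ.pt) (𝓝 (φ.prodFun φ.pt)) :=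
    tendsto_const_nhds.prodMk_nhds hright
  refine ⟨fun z ↦ φ.implicitFunction (φ.leftFun φ.pt) (φ.rightFun z), C, C.2, ?_, ?_⟩
  · simpa [Function.comp_def, φ.implicitFunction_apply_image.self_of_nhds] using
      hinv.continuousAt.tendsto.comp hslice
  · filter_upwards [φ.leftFun_implicitFunction_eq_leftFun, φ.implicitFunction_apply_image,
      hslice hs, (hleft.prodMk hright) hs] with z hz hinvz hzs hzs'
    refine ⟨hz, ?_⟩
    simpa [hinvz, dist_eq_norm, Prod.norm_def] using hlip.dist_le_mul _ hzs' _ hzs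

lemma exists_eventuallyEq_comp_leftFun (φ : ImplicitFunctionData ℝ E F G)
    (hl : ContDiffAt ℝ 1 φ.leftFun φ.pt) (hr : ContDiffAt ℝ 1 φ.rightFun φ.pt) {Θ : E → G'}
    (hΘ : ContDiffAt ℝ 1 Θ φ.pt)
    (hker : ∀ᶠ z in 𝓝 φ.pt, (fderiv ℝ φ.leftFun z).ker ≤ (fderiv ℝ Θ z).ker) :
    ∃ Ψ : F → G', DifferentiableAt ℝ Ψ (φ.leftFun φ.pt) ∧ Θ =ᶠ[𝓝 φ.pt] Ψ ∘ φ.leftFun := by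
  let ψ : F × G → E := φ.implicitFunction.uncurry
  have hψpt : ψ (φ.prodFun φ.pt) = φ.pt := φ.implicitFunction_apply_image.self_of_nhds
  have hψ : ContDiffAt ℝ 1 ψ (φ.prodFun φ.pt) := φ.contDiffAt_implicitFunction hl hr one_ne_zero
  have hψto : Tendsto ψ (𝓝 (φ.prodFun φ.pt)) (𝓝 φ.pt) := by
    simpa only [hψpt] using hψ.continuousAt.tendsto
  have hψd := (hψ.eventually (by simp)).mono fun p hp ↦ hp.differentiableAt one_ne_zero
  have hld := hψto.eventually
    ((hl.eventually (by simp)).mono fun z hz ↦ hz.differentiableAt one_ne_zero)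
  have hΘd := hψto.eventually
    ((hΘ.eventually (by simp)).mono fun z hz ↦ hz.differentiableAt one_ne_zero)
  have hvert : ∀ᶠ p in 𝓝 (φ.prodFun φ.pt), fderiv ℝ (Θ ∘ ψ) p ∘L .inr ℝ F G = 0 := by
    filter_upwards [hψd, hld, hΘd, hψto.eventually hker,
      φ.leftFun_implicitFunction.eventually_nhds] with p hψp hlp hΘp hkp hfst
    have hchain : fderiv ℝ φ.leftFun (ψ p) ∘L fderiv ℝ ψ p = .fst ℝ F G := by
      rw [← fderiv_comp p hlp hψp]
      exact (EventuallyEq.fderiv_eq hfst).trans fderiv_fst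
    ext v
    rw [fderiv_comp p hΘp hψp]
    exact hkp (by simpa using congr($hchain (0, v)))
  have hΘψ : ∀ᶠ p in 𝓝 (φ.prodFun φ.pt), DifferentiableAt ℝ (Θ ∘ ψ) p :=
    (hΘd.and hψd).mono fun p hp ↦ hp.1.comp p hp.2
  refine ⟨fun y ↦ (Θ ∘ ψ) (y, φ.rightFun φ.pt), ?_, ?_⟩
  · exact hΘψ.self_of_nhds.comp (f := fun y ↦ (y, φ.rightFun φ.pt)) (φ.leftFun φ.pt) (by fun_prop)
  · filter_upwards [φ.hasStrictFDerivAt.continuousAt.eventually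
      (eventually_eq_of_fderiv_comp_inr_eq_zero hΘψ hvert), φ.implicitFunction_apply_image]
      with z hz hinvz
    exact (congrArg Θ hinvz).symm.trans hz

end ImplicitFunction

section Submersion

variable {E F G : Type*} [NormedAddCommGroup E] [NormedSpace ℝ E] [CompleteSpace E]
  [NormedAddCommGroup F] [NormedSpace ℝ F] [FiniteDimensional ℝ F]
  [NormedAddCommGroup G] [NormedSpace ℝ G] {φ : E → F} {x : E}

lemma exists_retraction_of_range_fderiv_eq_top (hφ : ContDiffAt ℝ 1 φ x)
    (hsurj : (fderiv ℝ φ x).range = ⊤) :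
    ∃ (ρ : E → E) (C : ℝ), 0 ≤ C ∧ Tendsto ρ (𝓝 x) (𝓝 x) ∧
      ∀ᶠ z in 𝓝 x, φ (ρ z) = φ x ∧ dist z (ρ z) ≤ C * ‖φ z - φ x‖ :=
  have := FiniteDimensional.complete ℝ F
  exists_retraction_leftFun <|
    (hφ.hasStrictFDerivAt one_ne_zero).implicitFunctionDataOfComplemented _ _ hsurj
      (fderiv ℝ φ x).ker_closedComplemented_of_finiteDimensional_range

lemma exists_eventuallyEq_comp_of_ker_fderiv_le (hφ : ContDiffAt ℝ 1 φ x)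
    (hsurj : (fderiv ℝ φ x).range = ⊤) {Θ : E → G} (hΘ : ContDiffAt ℝ 1 Θ x)
    (hker : ∀ᶠ z in 𝓝 x, (fderiv ℝ φ z).ker ≤ (fderiv ℝ Θ z).ker) :
    ∃ Ψ : F → G, DifferentiableAt ℝ Ψ (φ x) ∧ Θ =ᶠ[𝓝 x] Ψ ∘ φ := by
  have := FiniteDimensional.complete ℝ F
  have hcompl := (fderiv ℝ φ x).ker_closedComplemented_of_finiteDimensional_range
  have hright : ContDiffAt ℝ 1 (fun z ↦ Classical.choose hcompl (z - x)) x := by fun_prop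
  exact exists_eventuallyEq_comp_leftFun
    ((hφ.hasStrictFDerivAt one_ne_zero).implicitFunctionDataOfComplemented _ _ hsurj hcompl)
    hφ hright hΘ hker

end Submersion

section ConstantRank

lemma ker_comp_eq_of_finrank_range_le {K E F G : Type*} [Field K] [AddCommGroup E] [Module K E]
    [AddCommGroup F] [Module K F] [AddCommGroup G] [Module K G]
    (A : E →ₗ[K] G) (T : G →ₗ[K] F) [FiniteDimensional K A.range]
    (h : Module.finrank K A.range ≤ Module.finrank K (T ∘ₗ A).range) : (T ∘ₗ A).ker = A.ker := by
  have hrange : (T.domRestrict A.range).range = (T ∘ₗ A).range := by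
    rw [LinearMap.range_domRestrict, LinearMap.range_comp]
  have hker : (T.domRestrict A.range).ker = ⊥ := by
    have hdim := (T.domRestrict A.range).finrank_range_add_finrank_ker
    rw [hrange] at hdim
    exact Submodule.finrank_eq_zero.1 (by lia)
  refine le_antisymm (fun x hx ↦ ?_) (LinearMap.ker_le_ker_comp A T)
  have hmem : A.rangeRestrict x ∈ (T.domRestrict A.range).ker := hx
  rw [hker, Submodule.mem_bot] at hmem
  exact congrArg Subtype.val hmem

variable {E G : Type*} [NormedAddCommGroup E] [NormedSpace ℝ E] [NormedAddCommGroup G]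
  [NormedSpace ℝ G]

/-- `Φ` is continuously differentiable at `x` and its derivative has constant rank near `x`. -/
structure HasConstantRankAt (Φ : E → G) (x : E) : Prop where
  contDiffAt : ContDiffAt ℝ 1 Φ x
  finrank_eq : ∀ᶠ z in 𝓝 x, Module.finrank ℝ (fderiv ℝ Φ z).range =
    Module.finrank ℝ (fderiv ℝ Φ x).range

namespace HasConstantRankAt

variable [FiniteDimensional ℝ G] {Φ : E → G} {x : E}

lemma exists_projection (h : HasConstantRankAt Φ x) :
    ∃ T : G →L[ℝ] (fderiv ℝ Φ x).range, (fderiv ℝ (T ∘ Φ) x).range = ⊤ ∧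
      ∀ᶠ z in 𝓝 x, (fderiv ℝ (T ∘ Φ) z).ker = (fderiv ℝ Φ z).ker := by
  obtain ⟨T, hT⟩ := Submodule.ClosedComplemented.of_finiteDimensional (fderiv ℝ Φ x).range
  have hd : ∀ᶠ z in 𝓝 x, fderiv ℝ (T ∘ Φ) z = T ∘L fderiv ℝ Φ z := by
    filter_upwards [h.contDiffAt.eventually (by simp)] with z hz
    rw [fderiv_comp z T.differentiableAt (hz.differentiableAt one_ne_zero), T.fderiv]
  have hsurj : (fderiv ℝ (T ∘ Φ) x).range = ⊤ := by
    rw [hd.self_of_nhds, LinearMap.range_eq_top]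
    rintro ⟨_, v, rfl⟩
    exact ⟨v, hT ⟨_, v, rfl⟩⟩
  have hcont : ContinuousAt (fderiv ℝ (T ∘ Φ)) x :=
    (T.contDiff.contDiffAt.comp x h.contDiffAt).continuousAt_fderiv one_ne_zero
  have hrank : ∀ᶠ z in 𝓝 x, Module.finrank ℝ (fderiv ℝ Φ x).range ≤
      Module.finrank ℝ (fderiv ℝ (T ∘ Φ) z).range := by
    have hopen := isOpen_setOfPred_nat_le_rank (𝕜 := ℝ) (E := E) (F := (fderiv ℝ Φ x).range)
      (Module.finrank ℝ (fderiv ℝ Φ x).range)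
    have hx : ((Module.finrank ℝ (fderiv ℝ Φ x).range : ℕ) : Cardinal) ≤
        (fderiv ℝ (T ∘ Φ) x).toLinearMap.rank := by
      rw [LinearMap.rank, hsurj, rank_top, Module.finrank_eq_rank]
    filter_upwards [hcont.eventually (hopen.mem_nhds hx)] with z hz
    rwa [LinearMap.rank, ← Module.finrank_eq_rank, Nat.cast_le] at hz
  refine ⟨T, hsurj, ?_⟩
  filter_upwards [hd, hrank, h.finrank_eq] with z hdz hrz hz
  rw [← hz, hdz] at hrz
  rw [hdz]
  exact ker_comp_eq_of_finrank_range_le (fderiv ℝ Φ z).toLinearMap T.toLinearMap hrz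

variable [CompleteSpace E]

lemma exists_submersion (h : HasConstantRankAt Φ x) :
    ∃ (T : G →L[ℝ] (fderiv ℝ Φ x).range) (Ψ : (fderiv ℝ Φ x).range → G),
      (fderiv ℝ (T ∘ Φ) x).range = ⊤ ∧ DifferentiableAt ℝ Ψ (T (Φ x)) ∧ Φ =ᶠ[𝓝 x] Ψ ∘ T ∘ Φ := by
  obtain ⟨T, hsurj, hker⟩ := h.exists_projection
  obtain ⟨Ψ, hΨ, hfac⟩ := exists_eventuallyEq_comp_of_ker_fderiv_le
    (T.contDiff.contDiffAt.comp x h.contDiffAt) hsurj h.contDiffAt (hker.mono fun z hz ↦ hz.le)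
  exact ⟨T, Ψ, hsurj, hΨ, hfac⟩

lemma exists_retraction (h : HasConstantRankAt Φ x) :
    ∃ (ρ : E → E) (C : ℝ), 0 ≤ C ∧ Tendsto ρ (𝓝 x) (𝓝 x) ∧
      ∀ᶠ z in 𝓝 x, Φ (ρ z) = Φ x ∧ dist z (ρ z) ≤ C * ‖Φ z - Φ x‖ := by
  obtain ⟨T, Ψ, hsurj, -, hfac⟩ := h.exists_submersion
  obtain ⟨ρ, C, hC, hρ, hretr⟩ := exists_retraction_of_range_fderiv_eq_top
    (T.contDiff.contDiffAt.comp x h.contDiffAt) hsurj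
  refine ⟨ρ, C * ‖T‖, by positivity, hρ, ?_⟩
  filter_upwards [hretr, hρ.eventually hfac] with z ⟨hz, hdist⟩ hfacz
  refine ⟨?_, hdist.trans ?_⟩
  · rw [hfacz, hfac.self_of_nhds]
    exact congrArg Ψ hz
  · rw [mul_assoc, Function.comp_apply, Function.comp_apply, ← map_sub]
    gcongr
    exact T.le_opNorm _

/-- Near `x` the image of `Φ` is a submanifold tangent to the range of the derivative. -/
lemma isLittleO_of_comp_fderiv_eq_zero (h : HasConstantRankAt Φ x) {F : Type*}
    [NormedAddCommGroup F] [NormedSpace ℝ F] {l : G →L[ℝ] F} (hl : l ∘L fderiv ℝ Φ x = 0) :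
    (fun z ↦ l (Φ z - Φ x)) =o[𝓝 x] fun z ↦ Φ z - Φ x := by
  obtain ⟨T, Ψ, hsurj, hΨ, hfac⟩ := h.exists_submersion
  have hTΦ : ContinuousAt (T ∘ Φ) x := T.continuous.continuousAt.comp h.contDiffAt.continuousAt
  have hTΦd : DifferentiableAt ℝ (T ∘ Φ) x :=
    T.differentiableAt.comp x (h.contDiffAt.differentiableAt one_ne_zero)
  have hlΨ : l ∘L fderiv ℝ Ψ (T (Φ x)) = 0 := by
    ext y
    obtain ⟨v, rfl⟩ := LinearMap.range_eq_top.1 hsurj y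
    rw [hfac.fderiv_eq, fderiv_comp x hΨ hTΦd] at hl
    exact congr($hl v)
  have hd : HasFDerivAt (l ∘ Ψ) 0 (T (Φ x)) := hlΨ ▸ l.hasFDerivAt.comp _ hΨ.hasFDerivAt
  have hO : (fun z ↦ T (Φ z) - T (Φ x)) =O[𝓝 x] fun z ↦ Φ z - Φ x := by
    simpa only [← map_sub] using T.isBigO_comp (fun z ↦ Φ z - Φ x) (𝓝 x)
  refine ((hd.isLittleO.comp_tendsto hTΦ).trans_isBigO hO).congr' ?_ .rfl
  filter_upwards [hfac] with z hz
  rw [map_sub, congr(l $hz), congr(l $hfac.self_of_nhds)]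
  exact sub_zero _

end HasConstantRankAt

end ConstantRank

section Correction

variable {E F : Type*} [NormedAddCommGroup E] [NormedSpace ℝ E] [NormedAddCommGroup F]
  [NormedSpace ℝ F]

lemma tendsto_add_smul_nhds {t : E → ℝ} {x : E} (ht : Tendsto t (𝓝 x) (𝓝 0)) (d : E) :
    Tendsto (fun z ↦ z + t z • d) (𝓝 x) (𝓝 x) := by
  simpa using tendsto_id.add (ht.smul_const d)

lemma isLittleO_add_smul_sub_of_hasStrictFDerivAt {f : E → F} {f' : E →L[ℝ] F} {x : E}
    (hf : HasStrictFDerivAt f f' x) {t : E → ℝ} (ht : Tendsto t (𝓝 x) (𝓝 0)) (d : E) :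
    (fun z ↦ f (z + t z • d) - f z - t z • f' d) =o[𝓝 x] t := by
  have hto : Tendsto (fun z ↦ (z + t z • d, z)) (𝓝 x) (𝓝 (x, x)) :=
    (tendsto_add_smul_nhds ht d).prodMk_nhds tendsto_id
  have ho := hf.isLittleO.comp_tendsto hto
  have hO : (fun z ↦ t z • d) =O[𝓝 x] t :=
    .of_bound ‖d‖ (.of_forall fun z ↦ by rw [norm_smul, mul_comm])
  refine (ho.trans_isBigO (by simpa [Function.comp_def] using hO)).congr_left fun z ↦ ?_
  simp

variable {G ι : Type*} [NormedAddCommGroup G] [NormedSpace ℝ G] [FiniteDimensional ℝ G]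
  [CompleteSpace E] [Fintype ι]

namespace HasConstantRankAt

variable {Φ : E → G} {x d : E} {r : E → ℝ}

lemma exists_retraction_along (hΦ : HasConstantRankAt Φ x) (hΦd : fderiv ℝ Φ x d = 0)
    (hr : Tendsto r (𝓝 x) (𝓝 0)) (hr₀ : ∀ z, 0 ≤ r z)
    (hΦr : ∀ᶠ z in 𝓝 x, ‖Φ z - Φ x‖ ≤ r z) :
    ∃ C, 0 ≤ C ∧ ∀ τ > 0, ∃ σ : E → E, Tendsto σ (𝓝 x) (𝓝 x) ∧ ∀ᶠ z in 𝓝 x,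
      Φ (σ z) = Φ x ∧ dist (z + (τ * r z) • d) (σ z) ≤ C * r z := by
  obtain ⟨ρ, C, hC, hρ, hretr⟩ := hΦ.exists_retraction
  refine ⟨C * 2, by positivity, fun τ hτ ↦ ?_⟩
  have ht : Tendsto (fun z ↦ τ * r z) (𝓝 x) (𝓝 0) := by simpa using hr.const_mul τ
  have hw := tendsto_add_smul_nhds ht d
  refine ⟨fun z ↦ ρ (z + (τ * r z) • d), hρ.comp hw, ?_⟩
  have hΦo := (isLittleO_add_smul_sub_of_hasStrictFDerivAt
    (hΦ.contDiffAt.hasStrictFDerivAt one_ne_zero) ht d).bound (inv_pos.2 hτ)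
  filter_upwards [hw.eventually hretr, hΦo, hΦr] with z ⟨hlevel, hdist⟩ hΦz hΦrz
  rw [hΦd, smul_zero, sub_zero, norm_mul, Real.norm_of_nonneg hτ.le, Real.norm_of_nonneg (hr₀ z),
    inv_mul_cancel_left₀ hτ.ne'] at hΦz
  refine ⟨hlevel, hdist.trans ?_⟩
  rw [mul_assoc]
  gcongr
  linarith [norm_sub_le_norm_sub_add_norm_sub (Φ (z + (τ * r z) • d)) (Φ z) (Φ x)]

/-- Moving from `z` by `τ * r z` along `d` decreases every `g · i` at rate `τ`, while retracting
onto the level set of `Φ` afterwards costs only `O(r z)`, with a constant independent of `τ`. -/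
lemma exists_correction (hΦ : HasConstantRankAt Φ x) (hΦd : fderiv ℝ Φ x d = 0)
    {g : E → ι → ℝ} (hg : ContDiffAt ℝ 1 g x) (hgd : ∀ i, fderiv ℝ g x d i ≤ -1)
    (hr : Tendsto r (𝓝 x) (𝓝 0)) (hr₀ : ∀ z, 0 ≤ r z)
    (hΦr : ∀ᶠ z in 𝓝 x, ‖Φ z - Φ x‖ ≤ r z) (hgr : ∀ z i, g z i ≤ r z) :
    ∃ (σ : E → E) (K : ℝ), 0 ≤ K ∧ Tendsto σ (𝓝 x) (𝓝 x) ∧ ∀ᶠ z in 𝓝 x,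
      Φ (σ z) = Φ x ∧ (∀ i, g (σ z) i ≤ 0) ∧ dist z (σ z) ≤ K * r z := by
  obtain ⟨C, hC, hretr⟩ := hΦ.exists_retraction_along hΦd hr hr₀ hΦr
  have hgstrict := hg.hasStrictFDerivAt one_ne_zero
  obtain ⟨L, s, hs, hlip⟩ := hgstrict.exists_lipschitzOnWith
  let τ : ℝ := 2 + L * C
  have hτ : 0 < τ := by positivity
  obtain ⟨σ, hσ, hσprop⟩ := hretr τ hτ
  have ht : Tendsto (fun z ↦ τ * r z) (𝓝 x) (𝓝 0) := by simpa using hr.const_mul τ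
  refine ⟨σ, τ * ‖d‖ + C, by positivity, hσ, ?_⟩
  filter_upwards [hσprop, hσ hs, tendsto_add_smul_nhds ht d hs,
    (isLittleO_add_smul_sub_of_hasStrictFDerivAt hgstrict ht d).bound (inv_pos.2 hτ)]
    with z ⟨hlevel, hdist⟩ hσs hws hgz
  have ht₀ : 0 ≤ τ * r z := mul_nonneg hτ.le (hr₀ z)
  rw [Real.norm_of_nonneg ht₀, inv_mul_cancel_left₀ hτ.ne'] at hgz
  refine ⟨hlevel, fun i ↦ ?_, ?_⟩
  · have hmove : g (z + (τ * r z) • d) i - g z i - τ * r z * fderiv ℝ g x d i ≤ r z :=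
      (le_abs_self _).trans ((norm_le_pi_norm _ i).trans hgz)
    have hretract : g (σ z) i - g (z + (τ * r z) • d) i ≤ L * (C * r z) := calc
      _ ≤ dist (g (σ z) i) (g (z + (τ * r z) • d) i) := Real.sub_le_dist _ _
      _ ≤ dist (g (σ z)) (g (z + (τ * r z) • d)) := dist_le_pi_dist _ _ i
      _ ≤ L * dist (σ z) (z + (τ * r z) • d) := hlip.dist_le_mul _ hσs _ hws
      _ ≤ L * (C * r z) := by rw [dist_comm]; gcongr
    have hτr : τ * r z = 2 * r z + L * (C * r z) := by ring
    linarith [mul_le_mul_of_nonneg_left (hgd i) ht₀, hgr z i, hτr]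
  · have hstep : dist z (z + (τ * r z) • d) = τ * ‖d‖ * r z := by
      rw [dist_self_add_right, norm_smul, Real.norm_of_nonneg ht₀]
      ring
    linarith [dist_triangle z (z + (τ * r z) • d) (σ z)]

end HasConstantRankAt

end Correction

section ErrorBound

lemma exists_sum_abs_le_abs_add_mul {ι κ : Type*} [Fintype ι] [Fintype κ] {μ : ι → ℝ}
    (hμ : ∀ i, 1 ≤ μ i) (c : κ → ℝ) :
    ∃ C, 0 ≤ C ∧ ∀ (u : ι → ℝ) (v : κ → ℝ), ∑ i, |u i| + ∑ j, |v j| ≤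
      |∑ i, μ i * u i + ∑ j, c j * v j| + C * (∑ i, max (u i) 0 + ∑ j, |v j|) := by
  have hμ₀ (i : ι) : 0 ≤ μ i := zero_le_one.trans (hμ i)
  have hμsum : 0 ≤ ∑ i, μ i := Finset.sum_nonneg fun i _ ↦ hμ₀ i
  have hcsum : 0 ≤ ∑ j, |c j| := Finset.sum_nonneg fun j _ ↦ abs_nonneg _
  refine ⟨2 * ∑ i, μ i + (∑ j, |c j| + 1), by positivity, fun u v ↦ ?_⟩
  set C := 2 * ∑ i, μ i + (∑ j, |c j| + 1)
  have hu : ∑ i, |u i| ≤ C * ∑ i, max (u i) 0 - ∑ i, μ i * u i := by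
    rw [Finset.mul_sum, ← Finset.sum_sub_distrib]
    refine Finset.sum_le_sum fun i _ ↦ ?_
    have hμC : 2 * μ i ≤ C := by
      linarith [Finset.single_le_sum (fun i _ ↦ hμ₀ i) (Finset.mem_univ i)]
    have habs : |u i| = 2 * max (u i) 0 - u i := by
      rcases le_total (u i) 0 with h | h
      · rw [abs_of_nonpos h, max_eq_right h]; ring
      · rw [abs_of_nonneg h, max_eq_left h]; ring
    calc |u i| ≤ μ i * |u i| := le_mul_of_one_le_left (abs_nonneg _) (hμ i)
      _ = 2 * μ i * max (u i) 0 - μ i * u i := by rw [habs]; ring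
      _ ≤ C * max (u i) 0 - μ i * u i := by gcongr
  have hv : ∑ j, |v j| ≤ C * ∑ j, |v j| - ∑ j, c j * v j := by
    rw [Finset.mul_sum, ← Finset.sum_sub_distrib]
    refine Finset.sum_le_sum fun j _ ↦ ?_
    have hcC : |c j| + 1 ≤ C := by
      linarith [Finset.single_le_sum (fun j _ ↦ abs_nonneg (c j)) (Finset.mem_univ j)]
    have hcv : c j * v j ≤ |c j| * |v j| := (le_abs_self _).trans (abs_mul _ _).le
    linarith [mul_le_mul_of_nonneg_right hcC (abs_nonneg (v j))]
  linarith [neg_le_abs (∑ i, μ i * u i + ∑ j, c j * v j)]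

/-- The constraints `g i z ≤ 0` and `h j z = 0` of a nonlinear program, without its objective. -/
structure ConstraintSystem (E ι κ : Type*) where
  g : ι → E → ℝ
  h : κ → E → ℝ

namespace ConstraintSystem

section Definitions

variable {E ι κ : Type*} (P : ConstraintSystem E ι κ)

/-- The points satisfying all constraints. -/
def feasibleSet : Set E := {z | (∀ i, P.g i z ≤ 0) ∧ ∀ j, P.h j z = 0}

/-- The inequality constraints that hold with equality at `x`. -/
def active (x : E) : Set ι := {i | P.g i x = 0}

/-- The total violation of the constraints at `z`, the right-hand side of the error bound. -/
def residual [Fintype ι] [Fintype κ] (z : E) : ℝ := ∑ i, max (P.g i z) 0 + ∑ j, |P.h j z|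

variable [NormedAddCommGroup E] [NormedSpace ℝ E]

/-- The index set `I⁻` of active inequalities that are equalities for the linearized system. -/
def implicitActive (x : E) : Set ι :=
  implicitEqualities ℝ (fun i ↦ (fderiv ℝ (P.g i) x).toLinearMap)
    (fun j ↦ (fderiv ℝ (P.h j) x).toLinearMap) (P.active x)

/-- The map collecting the constraints `g i`, `i ∈ I⁻`, and `h j`, whose derivatives span the
subspace component in CRSC. -/
def criticalMap (x z : E) : P.implicitActive x ⊕ κ → ℝ :=
  Sum.elim (fun i ↦ P.g i z) fun j ↦ P.h j z

/-- The constant rank of the subspace component condition, as constancy of the rank of the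
derivative of the critical map. -/
def CRSC (x : E) : Prop :=
  ∀ᶠ z in 𝓝 x, Module.finrank ℝ (fderiv ℝ (P.criticalMap x) z).range =
    Module.finrank ℝ (fderiv ℝ (P.criticalMap x) x).range

/-- The local error bound at `x`: distance to feasibility is at most a multiple of the residual. -/
def ErrorBound [Fintype ι] [Fintype κ] (x : E) : Prop :=
  ∃ α > 0, ∀ᶠ z in 𝓝 x, Metric.infDist z P.feasibleSet ≤ α * P.residual z

end Definitions

section Basic

variable {E ι κ : Type*} {P : ConstraintSystem E ι κ} [NormedAddCommGroup E] [NormedSpace ℝ E]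
  {x z : E}

lemma criticalMap_self (hx : x ∈ P.feasibleSet) : P.criticalMap x x = 0 :=
  funext <| Sum.rec (fun i ↦ i.2.1) hx.2

lemma mem_feasibleSet_of_criticalMap_eq_zero (hz : P.criticalMap x z = 0)
    (hactive : ∀ i ∈ P.active x \ P.implicitActive x, P.g i z ≤ 0)
    (hinactive : ∀ i ∉ P.active x, P.g i z ≤ 0) : z ∈ P.feasibleSet := by
  refine ⟨fun i ↦ ?_, fun j ↦ congrFun hz (.inr j)⟩
  by_cases hi : i ∈ P.active x
  · by_cases hiJ : i ∈ P.implicitActive x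
    · exact (congrFun hz (.inl ⟨i, hiJ⟩)).le
    · exact hactive i ⟨hi, hiJ⟩
  · exact hinactive i hi

lemma fderiv_criticalMap_apply (hg : ∀ i, DifferentiableAt ℝ (P.g i) z)
    (hh : ∀ j, DifferentiableAt ℝ (P.h j) z) (v : E) :
    fderiv ℝ (P.criticalMap x) z v =
      Sum.elim (fun i : P.implicitActive x ↦ fderiv ℝ (P.g i) z v)
        fun j ↦ fderiv ℝ (P.h j) z v := by
  ext k
  have hcoord (k) : DifferentiableAt ℝ (fun z ↦ P.criticalMap x z k) z :=
    k.rec (fun i ↦ hg i) hh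
  rw [fderiv_pi hcoord]
  cases k <;> rfl

lemma exists_fderiv_criticalMap_eq_zero [Finite ι] [Finite κ]
    (hg : ∀ i, DifferentiableAt ℝ (P.g i) x) (hh : ∀ j, DifferentiableAt ℝ (P.h j) x) :
    ∃ d, fderiv ℝ (P.criticalMap x) x d = 0 ∧
      ∀ i ∈ P.active x \ P.implicitActive x, fderiv ℝ (P.g i) x d ≤ -1 := by
  obtain ⟨d, hdJ, hdh, hdI⟩ := exists_apply_le_neg_one_diff_implicitEqualities
    (fun i ↦ (fderiv ℝ (P.g i) x).toLinearMap) (fun j ↦ (fderiv ℝ (P.h j) x).toLinearMap)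
    (P.active x)
  refine ⟨d, ?_, hdI⟩
  rw [fderiv_criticalMap_apply hg hh]
  exact funext <| Sum.rec (fun i ↦ hdJ i i.2) hdh

end Basic

variable {E ι κ : Type*} [Fintype ι] [Fintype κ] {P : ConstraintSystem E ι κ}

lemma residual_nonneg (P : ConstraintSystem E ι κ) (z : E) : 0 ≤ P.residual z := by
  unfold residual
  positivity

lemma g_le_residual (P : ConstraintSystem E ι κ) (i : ι) (z : E) : P.g i z ≤ P.residual z := by
  have hsingle : max (P.g i z) 0 ≤ ∑ i, max (P.g i z) 0 :=
    Finset.single_le_sum (f := fun i ↦ max (P.g i z) 0) (fun i _ ↦ le_max_right _ _)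
      (Finset.mem_univ i)
  have hh : 0 ≤ ∑ j, |P.h j z| := by positivity
  unfold residual
  linarith [le_max_left (P.g i z) 0]

lemma residual_eq_zero {x : E} (hx : x ∈ P.feasibleSet) : P.residual x = 0 := by
  simp [residual, hx.1, hx.2]

variable [NormedAddCommGroup E] [NormedSpace ℝ E] {x : E}

lemma tendsto_residual (hg : ∀ i, ContDiffAt ℝ 1 (P.g i) x) (hh : ∀ j, ContDiffAt ℝ 1 (P.h j) x)
    (hx : x ∈ P.feasibleSet) : Tendsto P.residual (𝓝 x) (𝓝 0) := by
  have hgc (i : ι) := (hg i).continuousAt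
  have hhc (j : κ) := (hh j).continuousAt
  have hcont : ContinuousAt P.residual x := by
    unfold ConstraintSystem.residual
    fun_prop
  simpa only [residual_eq_zero hx] using hcont.tendsto

lemma contDiffAt_criticalMap (hg : ∀ i, ContDiffAt ℝ 1 (P.g i) x)
    (hh : ∀ j, ContDiffAt ℝ 1 (P.h j) x) : ContDiffAt ℝ 1 (P.criticalMap x) x :=
  contDiffAt_pi.2 <| Sum.rec (fun i ↦ hg i) hh

lemma CRSC.hasConstantRankAt (hcrsc : P.CRSC x) (hg : ∀ i, ContDiffAt ℝ 1 (P.g i) x)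
    (hh : ∀ j, ContDiffAt ℝ 1 (P.h j) x) : HasConstantRankAt (P.criticalMap x) x :=
  ⟨contDiffAt_criticalMap hg hh, hcrsc⟩

lemma exists_sum_mul_fderiv_eq_zero (P : ConstraintSystem E ι κ) (x : E) :
    ∃ (μ : P.implicitActive x → ℝ) (c : κ → ℝ), (∀ i, 1 ≤ μ i) ∧ ∀ v,
      ∑ i, μ i * fderiv ℝ (P.g i) x v + ∑ j, c j * fderiv ℝ (P.h j) x v = 0 := by
  obtain ⟨μ, c, hμ, hμ₀, hsum⟩ := exists_one_le_sum_implicitEqualities_eq_zero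
    (fun i ↦ (fderiv ℝ (P.g i) x).toLinearMap) (fun j ↦ (fderiv ℝ (P.h j) x).toLinearMap)
    (P.active x)
  refine ⟨fun i ↦ μ i, c, fun i ↦ hμ i i.2, fun v ↦ ?_⟩
  rw [Finset.sum_set_coe (P.implicitActive x) (f := fun i ↦ μ i * fderiv ℝ (P.g i) x v),
    Finset.sum_subset (Finset.subset_univ _)
      fun i _ hi ↦ by rw [hμ₀ i (mt Set.mem_toFinset.2 hi), zero_mul]]
  simpa using LinearMap.congr_fun hsum v

variable [CompleteSpace E]

/-- The image of the critical map is tangent at the origin to a hyperplane with positive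
coefficients on the inequalities, so `|g i|` is controlled by the positive part of `g i`. -/
lemma CRSC.exists_norm_criticalMap_le (hcrsc : P.CRSC x) (hg : ∀ i, ContDiffAt ℝ 1 (P.g i) x)
    (hh : ∀ j, ContDiffAt ℝ 1 (P.h j) x) (hx : x ∈ P.feasibleSet) :
    ∃ C, 0 ≤ C ∧ ∀ᶠ z in 𝓝 x, ‖P.criticalMap x z‖ ≤ C * P.residual z := by
  obtain ⟨μ, c, hμ, hrel⟩ := P.exists_sum_mul_fderiv_eq_zero x
  obtain ⟨C, hC, hbound⟩ := exists_sum_abs_le_abs_add_mul hμ c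
  let l : (P.implicitActive x ⊕ κ → ℝ) →L[ℝ] ℝ :=
    ∑ i, μ i • .proj (.inl i) + ∑ j, c j • .proj (.inr j)
  have hl : l ∘L fderiv ℝ (P.criticalMap x) x = 0 := by
    ext v
    simpa [l, fderiv_criticalMap_apply (fun i ↦ (hg i).differentiableAt one_ne_zero)
      fun j ↦ (hh j).differentiableAt one_ne_zero] using hrel v
  have ho := (hcrsc.hasConstantRankAt hg hh).isLittleO_of_comp_fderiv_eq_zero hl
  refine ⟨2 * C, by positivity, ?_⟩
  filter_upwards [ho.bound (half_pos one_pos)] with z hz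
  rw [criticalMap_self hx, sub_zero] at hz
  have hlz : l (P.criticalMap x z) = ∑ i, μ i * P.g i z + ∑ j, c j * P.h j z := by
    simp [l, criticalMap]
  have hnorm := calc
    ‖P.criticalMap x z‖ ≤ ∑ k, |P.criticalMap x z k| :=
      (pi_norm_le_iff_of_nonneg (by positivity)).2 fun k ↦ Finset.single_le_sum
        (f := fun k ↦ |P.criticalMap x z k|) (fun k _ ↦ abs_nonneg _) (Finset.mem_univ k)
    _ = ∑ i : P.implicitActive x, |P.g i z| + ∑ j, |P.h j z| := Fintype.sum_sum_type _
  have hres : ∑ i : P.implicitActive x, max (P.g i z) 0 ≤ ∑ i, max (P.g i z) 0 := by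
    rw [Finset.sum_set_coe (P.implicitActive x) (f := fun i ↦ max (P.g i z) 0)]
    exact Finset.sum_le_univ_sum_of_nonneg fun i ↦ le_max_right _ _
  have hz' := hbound (fun i ↦ P.g i z) fun j ↦ P.h j z
  rw [← hlz, ← Real.norm_eq_abs] at hz'
  unfold residual
  nlinarith [mul_le_mul_of_nonneg_left hres hC]

theorem CRSC.errorBound (hcrsc : P.CRSC x) (hg : ∀ i, ContDiffAt ℝ 1 (P.g i) x)
    (hh : ∀ j, ContDiffAt ℝ 1 (P.h j) x) (hx : x ∈ P.feasibleSet) : P.ErrorBound x := by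
  obtain ⟨C, hC, hΦ⟩ := hcrsc.exists_norm_criticalMap_le hg hh hx
  obtain ⟨d, hdΦ, hdg⟩ := exists_fderiv_criticalMap_eq_zero
    (fun i ↦ (hg i).differentiableAt one_ne_zero) fun j ↦ (hh j).differentiableAt one_ne_zero
  let g (z : E) (i : ↥(P.active x \ P.implicitActive x)) : ℝ := P.g i z
  have hg' : ContDiffAt ℝ 1 g x := contDiffAt_pi.2 fun i ↦ hg i
  have hgd (i) : fderiv ℝ g x d i ≤ -1 := by
    unfold g
    rw [fderiv_pi fun i : ↥(P.active x \ P.implicitActive x) ↦ (hg i).differentiableAt one_ne_zero]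
    exact hdg i i.2
  have hres₀ := P.residual_nonneg
  obtain ⟨σ, K, hK, hσ, hcorr⟩ := (hcrsc.hasConstantRankAt hg hh).exists_correction hdΦ hg' hgd
    (r := fun z ↦ (C + 1) * P.residual z)
    (by simpa using (tendsto_residual hg hh hx).const_mul (C + 1))
    (fun z ↦ mul_nonneg (by positivity) (hres₀ z))
    (hΦ.mono fun z hz ↦ by rw [criticalMap_self hx, sub_zero]; linarith [hres₀ z])
    (fun z i ↦ by nlinarith [hres₀ z, P.g_le_residual i z])
  have hinactive : ∀ᶠ z in 𝓝 x, ∀ i ∉ P.active x, P.g i (σ z) < 0 := by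
    refine eventually_all.2 fun i ↦ eventually_imp_distrib_left.2 fun hi ↦ ?_
    exact hσ.eventually ((hg i).continuousAt.eventually_lt_const (lt_of_le_of_ne (hx.1 i) hi))
  refine ⟨K * (C + 1) + 1, by positivity, ?_⟩
  filter_upwards [hcorr, hinactive] with z ⟨hlevel, hgσ, hdist⟩ hneg
  have hmem : σ z ∈ P.feasibleSet :=
    mem_feasibleSet_of_criticalMap_eq_zero (hlevel.trans (criticalMap_self hx))
      (fun i hi ↦ hgσ ⟨i, hi⟩) fun i hi ↦ (hneg i hi).le
  linarith [Metric.infDist_le_dist_of_mem (x := z) hmem, hres₀ z]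

end ConstraintSystem

end ErrorBound

section Gradient

variable {E : Type*} [NormedAddCommGroup E] [InnerProductSpace ℝ E]

lemma contDiff_one_of_hasGradientAt [CompleteSpace E] {f : E → ℝ} {f' : E → E}
    (hf : ∀ z, HasGradientAt f (f' z) z) (hf' : Continuous f') : ContDiff ℝ 1 f :=
  contDiff_one_iff_hasFDerivAt.2 ⟨fun z ↦ InnerProductSpace.toDual ℝ E (f' z),
    (InnerProductSpace.toDual ℝ E).continuous.comp hf', fun z ↦ (hf z).hasFDerivAt⟩

lemma finrank_range_pi_innerₗ [FiniteDimensional ℝ E] {ι : Type*} (v : ι → E) :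
    Module.finrank ℝ (LinearMap.pi fun i ↦ innerₗ E (v i)).range = Set.finrank ℝ (Set.range v) := by
  have hker : (LinearMap.pi fun i ↦ innerₗ E (v i)).ker = (Submodule.span ℝ (Set.range v))ᗮ := by
    ext x
    have horth : x ∈ (Submodule.span ℝ (Set.range v))ᗮ ↔
        Submodule.span ℝ (Set.range v) ≤ (innerₗ E x).ker := Submodule.mem_orthogonal' _ _
    rw [horth, Submodule.span_le, Set.range_subset_iff]
    simp [funext_iff, real_inner_comm]
  have hrank := (LinearMap.pi fun i ↦ innerₗ E (v i)).finrank_range_add_finrank_ker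
  rw [hker, ← (Submodule.span ℝ (Set.range v)).finrank_add_finrank_orthogonal] at hrank
  exact Nat.add_right_cancel hrank

namespace ConstraintSystem

variable {ι κ : Type*} {P : ConstraintSystem E ι κ} {x z : E} {g' : ι → E} {h' : κ → E}

lemma implicitActive_eq_of_hasGradientAt [CompleteSpace E]
    (hg : ∀ i, HasGradientAt (P.g i) (g' i) x) (hh : ∀ j, HasGradientAt (P.h j) (h' j) x) :
    P.implicitActive x = implicitEqualities ℝ g' h' (P.active x) := by
  have hinj : Function.Injective (innerₗ E) := fun u v huv ↦
    ext_inner_right ℝ fun w ↦ LinearMap.congr_fun huv w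
  rw [← implicitEqualities_comp hinj, implicitActive]
  congr 1 <;> ext k v
  · simp [(hg k).hasFDerivAt.fderiv]
  · simp [(hh k).hasFDerivAt.fderiv]

lemma finrank_range_fderiv_criticalMap [FiniteDimensional ℝ E]
    (hg : ∀ i, HasGradientAt (P.g i) (g' i) z) (hh : ∀ j, HasGradientAt (P.h j) (h' j) z) :
    Module.finrank ℝ (fderiv ℝ (P.criticalMap x) z).range =
      Set.finrank ℝ (g' '' P.implicitActive x ∪ Set.range h') := by
  have hcoord : (fderiv ℝ (P.criticalMap x) z).toLinearMap = LinearMap.pi fun k ↦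
      innerₗ E (Sum.elim (fun i : P.implicitActive x ↦ g' i) h' k) := by
    ext v k
    rw [ContinuousLinearMap.coe_coe, fderiv_criticalMap_apply
      (fun i ↦ (hg i).hasFDerivAt.differentiableAt) fun j ↦ (hh j).hasFDerivAt.differentiableAt]
    cases k with
    | inl i => simp [(hg i).hasFDerivAt.fderiv]
    | inr j => simp [(hh j).hasFDerivAt.fderiv]
  rw [hcoord, finrank_range_pi_innerₗ, Set.Sum.elim_range, Set.image_eq_range]

end ConstraintSystem

end Gradient

namespace MPSC

variable {n p q m : ℕ} (P : MPSC n p q m)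

/-- The constraints of `NLP(β₁, β₂)` with `S = I_G* ∪ β₁` and `Sᶜ = I_H* ∪ β₂`: the branch of the
switching constraints on which `G i` vanishes for `i ∈ S` and `H i` for `i ∉ S`. -/
def branch (S : Set (Fin m)) : ConstraintSystem (Euc n) (Fin p) (Fin q ⊕ Fin m) where
  g := P.g
  h := Sum.elim P.h (S.piecewise P.G P.H)

/-- The branch on which the factor of each `G i z * H i z` that is smaller in absolute value is
required to vanish. -/
def nearestBranch (z : Euc n) : Set (Fin m) := {i | |P.G i z| ≤ |P.H i z|}

/-- The gradients of the equality constraints of `P.branch S`. -/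
def branchGradient (S : Set (Fin m)) : Fin q ⊕ Fin m → Euc n → Euc n :=
  Sum.elim P.h' (S.piecewise P.G' P.H')

lemma hasGradientAt_branch_h (S : Set (Fin m)) (k : Fin q ⊕ Fin m) (z : Euc n) :
    HasGradientAt ((P.branch S).h k) (P.branchGradient S k z) z := by
  rcases k with j | i
  · exact P.grad_h j z
  · by_cases hi : i ∈ S
    · simpa [branch, branchGradient, hi] using P.grad_G i z
    · simpa [branch, branchGradient, hi] using P.grad_H i z

lemma continuous_branchGradient (S : Set (Fin m)) (k : Fin q ⊕ Fin m) :
    Continuous (P.branchGradient S k) := by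
  rcases k with j | i
  · exact P.cont_h' j
  · by_cases hi : i ∈ S
    · simpa [branchGradient, hi] using P.cont_G' i
    · simpa [branchGradient, hi] using P.cont_H' i

variable {P} {zs z : Euc n} {S : Set (Fin m)}

lemma mem_feasibleSet_branch_iff : z ∈ (P.branch S).feasibleSet ↔ (∀ i, P.g i z ≤ 0) ∧
    (∀ j, P.h j z = 0) ∧ (∀ i ∈ S, P.G i z = 0) ∧ ∀ i ∉ S, P.H i z = 0 := by
  have hswitch : (∀ i, S.piecewise P.G P.H i z = 0) ↔
      (∀ i ∈ S, P.G i z = 0) ∧ ∀ i ∉ S, P.H i z = 0 := by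
    simp only [Set.piecewise, ← forall_and]
    refine forall_congr' fun i ↦ ?_
    split_ifs with hi <;> simp [hi]
  simp [ConstraintSystem.feasibleSet, branch, hswitch]

variable (P S) in
lemma feasibleSet_branch_subset : (P.branch S).feasibleSet ⊆ P.Feas := by
  intro z hz
  obtain ⟨hg, hh, hG, hH⟩ := mem_feasibleSet_branch_iff.1 hz
  refine ⟨hg, hh, fun i ↦ mul_eq_zero.2 ?_⟩
  exact (em (i ∈ S)).imp (hG i) (hH i)

variable (P z) in
lemma residual_nearestBranch : (P.branch (P.nearestBranch z)).residual z = P.residual z := by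
  have hmin (i : Fin m) : |(P.nearestBranch z).piecewise P.G P.H i z| =
      min |P.G i z| |P.H i z| := by
    by_cases hi : i ∈ P.nearestBranch z
    · rw [Set.piecewise_eq_of_mem _ _ _ hi, min_eq_left hi]
    · rw [Set.piecewise_eq_of_notMem _ _ _ hi, min_eq_right (not_le.1 hi).le]
  simp [ConstraintSystem.residual, residual, branch, hmin, add_assoc]

lemma eventually_mem_feasibleSet_nearestBranch (hzs : zs ∈ P.Feas) :
    ∀ᶠ z in 𝓝 zs, zs ∈ (P.branch (P.nearestBranch z)).feasibleSet := by
  have hG (i : Fin m) : ContinuousAt (P.G i) zs := (P.grad_G i zs).hasFDerivAt.continuousAt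
  have hH (i : Fin m) : ContinuousAt (P.H i) zs := (P.grad_H i zs).hasFDerivAt.continuousAt
  have hswitch (i : Fin m) : ∀ᶠ z in 𝓝 zs, (|P.G i z| ≤ |P.H i z| → P.G i zs = 0) ∧
      (|P.H i z| < |P.G i z| → P.H i zs = 0) := by
    rcases mul_eq_zero.1 (hzs.2.2 i) with h | h
    · by_cases h' : P.H i zs = 0
      · simp [h, h']
      · filter_upwards [(hG i).abs.eventually_lt (hH i).abs (by simpa [h] using h')] with z hz
        exact ⟨fun _ ↦ h, fun hlt ↦ absurd hlt hz.not_gt⟩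
    · by_cases h' : P.G i zs = 0
      · simp [h, h']
      · filter_upwards [(hH i).abs.eventually_lt (hG i).abs (by simpa [h] using h')] with z hz
        exact ⟨fun hle ↦ absurd hle hz.not_ge, fun _ ↦ h⟩
  filter_upwards [eventually_all.2 hswitch] with z hz
  exact mem_feasibleSet_branch_iff.2
    ⟨hzs.1, hzs.2.1, fun i hi ↦ (hz i).1 hi, fun i hi ↦ (hz i).2 (not_le.1 hi)⟩

lemma IGs_union_IGH_inter (hS : zs ∈ (P.branch S).feasibleSet) :
    P.IGs zs ∪ P.IGH zs ∩ S = S := by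
  obtain ⟨-, -, hG, hH⟩ := mem_feasibleSet_branch_iff.1 hS
  ext i
  by_cases hi : i ∈ S
  · simp [hi, IGs, IGH, hG i hi, em']
  · simp [hi, IGs, hH i hi]

lemma IHs_union_IGH_diff (hS : zs ∈ (P.branch S).feasibleSet) :
    P.IHs zs ∪ P.IGH zs \ S = Sᶜ := by
  obtain ⟨-, -, hG, hH⟩ := mem_feasibleSet_branch_iff.1 hS
  ext i
  by_cases hi : i ∈ S
  · simp [hi, IHs, hG i hi]
  · simp [hi, IHs, IGH, hH i hi, em']

variable (P S z) in
lemma range_branchGradient : Set.range (fun k ↦ P.branchGradient S k z) =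
    Set.range (fun j ↦ P.h' j z) ∪ (fun i ↦ P.G' i z) '' S ∪ (fun i ↦ P.H' i z) '' Sᶜ := by
  have hsum : (fun k ↦ P.branchGradient S k z) =
      Sum.elim (fun j ↦ P.h' j z) (S.piecewise (fun i ↦ P.G' i z) fun i ↦ P.H' i z) := by
    ext k : 1
    rcases k with j | i
    · rfl
    · exact apply_ite (fun f : Euc n → Euc n ↦ f z) _ _ _
  rw [hsum, Set.Sum.elim_range, Set.range_piecewise, Set.union_assoc]

lemma add_smul_branchGradient_inr {lG lH : Fin m → ℝ} (hG : ∀ i ∉ S, lG i = 0)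
    (hH : ∀ i ∉ Sᶜ, lH i = 0) (i : Fin m) (z : Euc n) :
    (lG i + lH i) • P.branchGradient S (.inr i) z = lG i • P.G' i z + lH i • P.H' i z := by
  by_cases hi : i ∈ S
  · simp [branchGradient, hi, hH i (not_not.2 hi)]
  · simp [branchGradient, hi, hG i hi]

lemma Iminus_eq_implicitEqualities (hS : zs ∈ (P.branch S).feasibleSet) :
    P.Iminus zs (P.IGH zs ∩ S) (P.IGH zs \ S) = implicitEqualities ℝ (fun i ↦ P.g' i zs)
      (fun k ↦ P.branchGradient S k zs) (P.Ig zs) := by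
  ext l
  simp only [Iminus, implicitEqualities, IGs_union_IGH_inter hS, IHs_union_IGH_diff hS,
    mem_multiplierCone_iff, Fintype.sum_sum_type, Set.mem_ofPred_eq]
  refine and_congr_right fun _ ↦ ⟨?_, ?_⟩
  · rintro ⟨lh, lG, lH, μ, hG, hH, hμ, hμ₀, heq⟩
    refine ⟨μ, Sum.elim lh (lG + lH), hμ, hμ₀, ?_⟩
    simp only [Sum.elim_inl, Sum.elim_inr, Pi.add_apply, add_smul_branchGradient_inr hG hH]
    exact heq.trans (add_comm _ _)
  · rintro ⟨μ, c, hμ, hμ₀, heq⟩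
    have hG (i) (hi : i ∉ S) : S.indicator (c ∘ .inr) i = 0 := Set.indicator_of_notMem hi _
    have hH (i) (hi : i ∉ Sᶜ) : Sᶜ.indicator (c ∘ .inr) i = 0 := Set.indicator_of_notMem hi _
    refine ⟨c ∘ .inl, S.indicator (c ∘ .inr), Sᶜ.indicator (c ∘ .inr), μ, hG, hH, hμ, hμ₀, ?_⟩
    simp only [← add_smul_branchGradient_inr hG hH, Set.indicator_self_add_compl_apply]
    exact heq.trans (add_comm _ _)

lemma PiecewiseCRSC.branch (hcrsc : P.PiecewiseCRSC zs) (hS : zs ∈ (P.branch S).feasibleSet) :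
    (P.branch S).CRSC zs := by
  have hminus : (P.branch S).implicitActive zs = P.Iminus zs (P.IGH zs ∩ S) (P.IGH zs \ S) :=
    (ConstraintSystem.implicitActive_eq_of_hasGradientAt (fun i ↦ P.grad_g i zs)
      fun k ↦ P.hasGradientAt_branch_h S k zs).trans (Iminus_eq_implicitEqualities hS).symm
  have hrank (z : Euc n) :
      Module.finrank ℝ (fderiv ℝ ((P.branch S).criticalMap zs) z).range =
      Set.finrank ℝ ((fun i ↦ P.g' i z) '' P.Iminus zs (P.IGH zs ∩ S) (P.IGH zs \ S) ∪
        P.EqGrads zs (P.IGH zs ∩ S) (P.IGH zs \ S) z) := by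
    rw [ConstraintSystem.finrank_range_fderiv_criticalMap (fun i ↦ P.grad_g i z)
      fun k ↦ P.hasGradientAt_branch_h S k z, hminus, range_branchGradient, EqGrads,
      IGs_union_IGH_inter hS, IHs_union_IGH_diff hS]
  obtain ⟨U, hU, hconst⟩ := hcrsc (P.IGH zs ∩ S) (P.IGH zs \ S) (Set.inter_union_sdiff _ _)
    Set.disjoint_sdiff_inter.symm.inter_eq
  filter_upwards [hU] with z hz
  rw [hrank, hrank, hconst z hz]

lemma PiecewiseCRSC.errorBound_branch (hcrsc : P.PiecewiseCRSC zs)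
    (hS : zs ∈ (P.branch S).feasibleSet) : (P.branch S).ErrorBound zs :=
  (hcrsc.branch hS).errorBound
    (fun i ↦ (contDiff_one_of_hasGradientAt (P.grad_g i) (P.cont_g' i)).contDiffAt)
    (fun k ↦ (contDiff_one_of_hasGradientAt (P.hasGradientAt_branch_h S k)
      (P.continuous_branchGradient S k)).contDiffAt) hS

end MPSC

/-- MPSC piecewise CRSC implies the MPSC local error bound. -/
theorem mpsc_piecewiseCRSC_errorBound {n p q m : ℕ} (P : MPSC n p q m) (zs : Euc n)
    (hfeas : zs ∈ P.Feas) (hcrsc : P.PiecewiseCRSC zs) :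
    P.ErrorBound zs := by
  have hbranch (S : Set (Fin m)) (hS : zs ∈ (P.branch S).feasibleSet) : ∃ α, ∀ᶠ z in 𝓝 zs,
      Metric.infDist z (P.branch S).feasibleSet ≤ α * (P.branch S).residual z :=
    let ⟨α, _, hα⟩ := hcrsc.errorBound_branch hS
    ⟨α, hα⟩
  choose! α hα using hbranch
  obtain ⟨M, hM⟩ := Finite.exists_le α
  obtain ⟨V, hV, hbound⟩ := ((eventually_all.2 fun S ↦ eventually_imp_distrib_left.2 (hα S)).and
    (P.eventually_mem_feasibleSet_nearestBranch hfeas)).exists_mem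
  refine ⟨V, hV, max M 1, by positivity, fun z hz ↦ ?_⟩
  obtain ⟨hinf, hzs⟩ := hbound z hz
  calc Metric.infDist z P.Feas
      ≤ Metric.infDist z (P.branch (P.nearestBranch z)).feasibleSet :=
        Metric.infDist_le_infDist_of_subset (P.feasibleSet_branch_subset _) ⟨zs, hzs⟩
    _ ≤ α (P.nearestBranch z) * (P.branch (P.nearestBranch z)).residual z := hinf _ hzs
    _ ≤ max M 1 * (P.branch (P.nearestBranch z)).residual z :=
        mul_le_mul_of_nonneg_right ((hM _).trans (le_max_left _ _))
          (ConstraintSystem.residual_nonneg _ z)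
    _ = max M 1 * P.residual z := by rw [P.residual_nearestBranch]
end
end

section
/- Let z* ∈ F. Suppose that for every bipartition (β₁, β₂) of I_GH* (β₁ ∪ β₂ = I_GH*, β₁ ∩ β₂ = ∅) there exist a neighborhood V_{β₁,β₂} of z* and a constant α_{β₁,β₂} > 0 such that dist(z, F) ≤ α_{β₁,β₂}(Σ_{i=1}^p max{g_i(z),0} + Σ_{j=1}^q |h_j(z)| + Σ_{i∈I_G*∪β₁} |G_i(z)| + Σ_{i∈I_H*∪β₂} |H_i(z)|) for all z ∈ V_{β₁,β₂}. Then the MPSC local error bound holds around z*: there exist a neighborhood V of z* and α > 0 such that dist(z, F) ≤ α(Σ_{i=1}^p max{g_i(z),0} + Σ_{j=1}^q |h_j(z)| + Σ_{i=1}^m min{|G_i(z)|, |H_i(z)|}) for all z ∈ V. -/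
open scoped Classical InnerProductSpace
open Filter Topology

noncomputable section

/-! At each point `x` near `z*`, let `β₁` collect the biactive indices with `|Gᵢ(x)| ≤ |Hᵢ(x)|` and
`β₂` the remaining ones. By continuity `|Gᵢ| < |Hᵢ|` near `z*` on `I_G*`, and symmetrically on
`I_H*`, so the residual of the branch `(β₁, β₂)` at `x` is at most the MPSC residual. The branch
depends on `x`, but there are only finitely many branches: intersecting their neighbourhoods and
taking the largest of their constants gives one estimate for all `x`. -/

/-- The error bound `φ ≤ α ρ` along a filter `l`: in optimization `φ` is the distance to a feasible
set, `ρ` a residual measuring constraint violation and `l = 𝓝 z*`. The set `V ∈ l` is explicit to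
match `MPSC.ErrorBound`. -/
def HasErrorBound {X : Type*} (l : Filter X) (φ ρ : X → ℝ) : Prop :=
  ∃ V ∈ l, ∃ α > (0 : ℝ), ∀ x ∈ V, φ x ≤ α * ρ x

theorem HasErrorBound.of_forall_of_eventually_exists_le {X κ : Type*} [Finite κ] {l : Filter X}
    {φ σ : X → ℝ} {ρ : κ → X → ℝ} (hρ : ∀ k, HasErrorBound l φ (ρ k))
    (hσ : ∀ᶠ x in l, 0 ≤ σ x) (hle : ∀ᶠ x in l, ∃ k, ρ k x ≤ σ x) :
    HasErrorBound l φ σ := by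
  choose V hV α hα hbound using hρ
  obtain ⟨M, hM⟩ := Finite.exists_le α
  have hφ : ∀ᶠ x in l, φ x ≤ max M 1 * σ x := by
    filter_upwards [eventually_all.mpr hV, hσ, hle] with x hxV hσx ⟨k, hk⟩
    calc φ x ≤ α k * ρ k x := hbound k x (hxV k)
      _ ≤ α k * σ x := mul_le_mul_of_nonneg_left hk (hα k).le
      _ ≤ max M 1 * σ x := mul_le_mul_of_nonneg_right (le_max_of_le_left (hM k)) hσx
  exact ⟨_, hφ, max M 1, lt_max_of_lt_right one_pos, fun _ hx => hx⟩

theorem eventually_norm_lt_norm_of_eq_zero_of_ne_zero {X E E' : Type*} [TopologicalSpace X]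
    [SeminormedAddCommGroup E] [NormedAddCommGroup E'] {u : X → E} {v : X → E'} {x₀ : X}
    (hu : ContinuousAt u x₀) (hv : ContinuousAt v x₀) (hu₀ : u x₀ = 0) (hv₀ : v x₀ ≠ 0) :
    ∀ᶠ x in 𝓝 x₀, ‖u x‖ < ‖v x‖ :=
  hu.norm.eventually_lt hv.norm (by simpa [hu₀] using hv₀)

theorem sum_add_sum_le_sum_min {ι M : Type*} [AddCommMonoid M] [LinearOrder M]
    [IsOrderedAddMonoid M] {s A B : Finset ι} {a b : ι → M} (hA : A ⊆ s) (hB : B ⊆ s)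
    (hAB : Disjoint A B) (hnonneg : ∀ i ∈ s, 0 ≤ min (a i) (b i))
    (hab : ∀ i ∈ A, a i ≤ b i) (hba : ∀ i ∈ B, b i ≤ a i) :
    ∑ i ∈ A, a i + ∑ i ∈ B, b i ≤ ∑ i ∈ s, min (a i) (b i) :=
  calc ∑ i ∈ A, a i + ∑ i ∈ B, b i
      = ∑ i ∈ A, min (a i) (b i) + ∑ i ∈ B, min (a i) (b i) :=
        congrArg₂ (· + ·) (Finset.sum_congr rfl fun i hi => (min_eq_left (hab i hi)).symm)
          (Finset.sum_congr rfl fun i hi => (min_eq_right (hba i hi)).symm)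
    _ = ∑ i ∈ A ∪ B, min (a i) (b i) := (Finset.sum_union hAB).symm
    _ ≤ ∑ i ∈ s, min (a i) (b i) :=
        Finset.sum_le_sum_of_subset_of_nonneg (Finset.union_subset hA hB)
          fun i hi _ => hnonneg i hi

section IndexSets

variable {X E E' ι : Type*} [Zero E] [Zero E']

/-- `I_G*` for switching constraints `Gᵢ = 0 ∨ Hᵢ = 0`: the indices whose branch near `x₀` is forced
to be `Gᵢ = 0`. -/
def activeLeft (G : ι → X → E) (H : ι → X → E') (x₀ : X) : Set ι := {i | G i x₀ = 0 ∧ H i x₀ ≠ 0}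

/-- `I_H*` for switching constraints `Gᵢ = 0 ∨ Hᵢ = 0`: the indices whose branch near `x₀` is forced
to be `Hᵢ = 0`. -/
def activeRight (G : ι → X → E) (H : ι → X → E') (x₀ : X) : Set ι := {i | G i x₀ ≠ 0 ∧ H i x₀ = 0}

/-- `I_GH*` for switching constraints `Gᵢ = 0 ∨ Hᵢ = 0`: the indices whose branch near `x₀` is
free. -/
def biactive (G : ι → X → E) (H : ι → X → E') (x₀ : X) : Set ι := {i | G i x₀ = 0 ∧ H i x₀ = 0}

theorem disjoint_activeLeft_union_activeRight_union {G : ι → X → E} {H : ι → X → E'} {x₀ : X}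
    {b₁ b₂ : Set ι}
    (hunion : b₁ ∪ b₂ ⊆ biactive G H x₀) (hinter : b₁ ∩ b₂ = ∅) :
    Disjoint (activeLeft G H x₀ ∪ b₁) (activeRight G H x₀ ∪ b₂) := by
  refine Set.disjoint_left.mpr ?_
  rintro i (hi | hi) (hi' | hi')
  · exact hi'.1 hi.1
  · exact hi.2 (hunion (.inr hi')).2
  · exact hi'.1 (hunion (.inl hi)).1
  · exact (Set.disjoint_iff_inter_eq_empty.mpr hinter).notMem_of_mem_left hi hi'

end IndexSets

section Switching

variable {X E E' ι : Type*} [TopologicalSpace X] [NormedAddCommGroup E] [NormedAddCommGroup E']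
  {G : ι → X → E} {H : ι → X → E'} {x₀ : X}

theorem eventually_exists_bipartition_norm_le_norm [Finite ι] (hG : ∀ i, ContinuousAt (G i) x₀)
    (hH : ∀ i, ContinuousAt (H i) x₀) :
    ∀ᶠ x in 𝓝 x₀, ∃ b₁ b₂ : Set ι, b₁ ∪ b₂ = biactive G H x₀ ∧ b₁ ∩ b₂ = ∅ ∧
      (∀ i ∈ activeLeft G H x₀ ∪ b₁, ‖G i x‖ ≤ ‖H i x‖) ∧
      ∀ i ∈ activeRight G H x₀ ∪ b₂, ‖H i x‖ ≤ ‖G i x‖ := by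
  have hleft : ∀ᶠ x in 𝓝 x₀, ∀ i ∈ activeLeft G H x₀, ‖G i x‖ < ‖H i x‖ :=
    (Set.toFinite _).eventually_all.mpr fun i hi =>
      eventually_norm_lt_norm_of_eq_zero_of_ne_zero (hG i) (hH i) hi.1 hi.2
  have hright : ∀ᶠ x in 𝓝 x₀, ∀ i ∈ activeRight G H x₀, ‖H i x‖ < ‖G i x‖ :=
    (Set.toFinite _).eventually_all.mpr fun i hi =>
      eventually_norm_lt_norm_of_eq_zero_of_ne_zero (hH i) (hG i) hi.2 hi.1
  filter_upwards [hleft, hright] with x hleftx hrightx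
  let b : Set ι := {i | ‖G i x‖ ≤ ‖H i x‖}
  refine ⟨biactive G H x₀ ∩ b, biactive G H x₀ \ b, Set.inter_union_sdiff _ _,
    (Set.disjoint_sdiff_right.mono_left Set.inter_subset_right).inter_eq, ?_, ?_⟩
  · rintro i (hi | hi)
    exacts [(hleftx i hi).le, hi.2]
  · rintro i (hi | hi)
    exacts [(hrightx i hi).le, (not_le.mp hi.2).le]

variable [Fintype ι]

theorem eventually_exists_branch_sum_le_sum_min (hG : ∀ i, ContinuousAt (G i) x₀)
    (hH : ∀ i, ContinuousAt (H i) x₀) :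
    ∀ᶠ x in 𝓝 x₀, ∃ b₁ b₂ : Set ι, b₁ ∪ b₂ = biactive G H x₀ ∧ b₁ ∩ b₂ = ∅ ∧
      ∑ i with i ∈ activeLeft G H x₀ ∪ b₁, ‖G i x‖ + ∑ i with i ∈ activeRight G H x₀ ∪ b₂, ‖H i x‖
      ≤ ∑ i, min ‖G i x‖ ‖H i x‖ := by
  filter_upwards [eventually_exists_bipartition_norm_le_norm hG hH]
    with x ⟨b₁, b₂, hunion, hinter, hGH, hHG⟩
  have hdisj := disjoint_activeLeft_union_activeRight_union hunion.subset hinter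
  refine ⟨b₁, b₂, hunion, hinter, sum_add_sum_le_sum_min (Finset.filter_subset _ _)
    (Finset.filter_subset _ _) ?_ (fun i _ => by positivity) ?_ ?_⟩
  · exact Finset.disjoint_filter.mpr fun i _ hi => Set.disjoint_left.mp hdisj hi
  · exact fun i hi => hGH i (Finset.mem_filter.mp hi).2
  · exact fun i hi => hHG i (Finset.mem_filter.mp hi).2

theorem mpsc_branch_errorBounds_imply_errorBound_general {φ ρ : X → ℝ}
    (hρ : ∀ᶠ x in 𝓝 x₀, 0 ≤ ρ x) (hG : ∀ i, ContinuousAt (G i) x₀)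
    (hH : ∀ i, ContinuousAt (H i) x₀)
    (hbranch : ∀ b₁ b₂ : Set ι, b₁ ∪ b₂ = biactive G H x₀ → b₁ ∩ b₂ = ∅ →
      HasErrorBound (𝓝 x₀) φ fun x => ρ x + ∑ i with i ∈ activeLeft G H x₀ ∪ b₁, ‖G i x‖
        + ∑ i with i ∈ activeRight G H x₀ ∪ b₂, ‖H i x‖) :
    HasErrorBound (𝓝 x₀) φ fun x => ρ x + ∑ i, min ‖G i x‖ ‖H i x‖ := by
  refine HasErrorBound.of_forall_of_eventually_exists_le
    (κ := {b : Set ι × Set ι // b.1 ∪ b.2 = biactive G H x₀ ∧ b.1 ∩ b.2 = ∅})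
    (fun b => hbranch _ _ b.2.1 b.2.2) ?_ ?_
  · filter_upwards [hρ] with x hx
    positivity
  · filter_upwards [eventually_exists_branch_sum_le_sum_min hG hH]
      with x ⟨b₁, b₂, hunion, hinter, hle⟩
    exact ⟨⟨(b₁, b₂), hunion, hinter⟩, (add_assoc _ _ _).trans_le (add_le_add_right hle (ρ x))⟩

end Switching

/-- branchwise error bounds for all bipartitions of `I_GH*` imply the
MPSC local error bound. -/
theorem mpsc_branch_errorBounds_imply_errorBound {n p q m : ℕ} (P : MPSC n p q m)
    (zs : Euc n) (hfeas : zs ∈ P.Feas)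
    (hyp : ∀ b1 b2 : Set (Fin m), b1 ∪ b2 = P.IGH zs → b1 ∩ b2 = ∅ →
      ∃ V ∈ 𝓝 zs, ∃ α > (0 : ℝ), ∀ z ∈ V,
        Metric.infDist z P.Feas ≤
          α * ((∑ i, max (P.g i z) 0) + (∑ j, |P.h j z|)
            + (∑ i ∈ Finset.univ.filter (fun i => i ∈ P.IGs zs ∪ b1), |P.G i z|)
            + (∑ i ∈ Finset.univ.filter (fun i => i ∈ P.IHs zs ∪ b2), |P.H i z|))) :
    P.ErrorBound zs :=
  mpsc_branch_errorBounds_imply_errorBound_general (.of_forall fun z => by positivity)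
    (fun i => (P.grad_G i zs).continuousAt) (fun i => (P.grad_H i zs).continuousAt) hyp
end
end
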